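/- Assume the pairs (𝓡₁, 𝓡₂) and (𝓡₁*, 𝓡₂*) are incommensurate, fix j ∈ {1,2}, and let h ∈ L¹_loc(ℝ⁴) be 𝓡_𝓜 × 𝓡_{3−j}-periodic. Then the ergodic averages 𝒜_N(h)(ω_𝓜, ω_{3−j}) := (2N+1)^{−2} Σ_{R_j ∈ 𝓡_j(N)} h(ω_𝓜 + R_j, ω_{3−j} + R_j) converge, as N → ∞, for Lebesgue-almost all (ω_𝓜, ω_{3−j}) ∈ Γ_𝓜 × Γ_{3−j} and also in L¹(Γ_𝓜 × Γ_{3−j}), to ⨍_{A_j^{−1}Γ_𝓜} h(A_j ξ + ω_𝓜, (A_j − A_{3−j}) ξ + ω_{3−j}) dξ, which equals ⨍_{Γ_𝓜} h(x, D_{j→3−j}(x − ω_𝓜) + ω_{3−j}) dx and ⨍_{Γ_{3−j}} h(D_{j→3−j}^{−1}(y − ω_{3−j}) + ω_𝓜, y) dy. -/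

import Mathlib

open scoped Real BigOperators
open MeasureTheory Filter Topology Matrix

noncomputable section

/-- The 2×2 rotation matrix through angle `φ`. -/
def Rot (φ : ℝ) : Matrix (Fin 2) (Fin 2) ℝ :=
  !![Real.cos φ, -Real.sin φ; Real.sin φ, Real.cos φ]

/-- Euclidean norm on `ℝ²`. -/
def norm2 (v : Fin 2 → ℝ) : ℝ := Real.sqrt (v 0 ^ 2 + v 1 ^ 2)

/-- Euclidean norm on `ℝ³`. -/
def norm3 (v : Fin 3 → ℝ) : ℝ := Real.sqrt (v 0 ^ 2 + v 1 ^ 2 + v 2 ^ 2)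

/-- Cast an integer vector to a real vector. -/
def iv (n : Fin 2 → ℤ) : Fin 2 → ℝ := fun i => (n i : ℝ)

/-- The lattice `M ℤ²`. -/
def lat (M : Matrix (Fin 2) (Fin 2) ℝ) : Set (Fin 2 → ℝ) :=
  {v | ∃ n : Fin 2 → ℤ, v = M.mulVec (iv n)}

/-- The unit cell `M [0,1)²`. -/
def cell (M : Matrix (Fin 2) (Fin 2) ℝ) : Set (Fin 2 → ℝ) :=
  {v | ∃ t : Fin 2 → ℝ, (∀ i, t i ∈ Set.Ico (0 : ℝ) 1) ∧ v = M.mulVec t}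

/-- The reciprocal matrix `2π M⁻ᵀ`. -/
def recip (M : Matrix (Fin 2) (Fin 2) ℝ) : Matrix (Fin 2) (Fin 2) ℝ :=
  (2 * π) • (M⁻¹)ᵀ

/-- A pair of lattices with reciprocal-lattice matrices `B1`, `B2` is incommensurate iff
`G₁ + G₂ = 0` with `G_k` in the respective reciprocal lattice implies `G₁ = G₂ = 0`. -/
def Incommensurate (B1 B2 : Matrix (Fin 2) (Fin 2) ℝ) : Prop :=
  ∀ G1 ∈ lat B1, ∀ G2 ∈ lat B2, G1 + G2 = 0 → G1 = 0 ∧ G2 = 0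

/-- Euclidean distance from `v ∈ ℝ²` to the integer lattice `ℤ²`. -/
def distZ2 (v : Fin 2 → ℝ) : ℝ := ⨅ m : Fin 2 → ℤ, norm2 (v - iv m)

/-- `θ` is a `(q,K,σ)`-Diophantine 2D rotation. -/
def IsDiophantine (A : Matrix (Fin 2) (Fin 2) ℝ) (q K σ θ : ℝ) : Prop :=
  ∀ n : Fin 2 → ℤ, n ≠ 0 →
    K / norm2 (iv n) ^ (2 * σ) ≤ distZ2 ((q • (Aᵀ * Rot θ * (A⁻¹)ᵀ)).mulVec (iv n)) ∧
    K / norm2 (iv n) ^ (2 * σ) ≤ distZ2 ((q⁻¹ • (Aᵀ * Rot (-θ) * (A⁻¹)ᵀ)).mulVec (iv n))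

/-- The moiré length scale ratio `ρ_𝓜`. -/
def rhoM (q θ : ℝ) : ℝ :=
  (Real.sqrt ((Real.sqrt q - (Real.sqrt q)⁻¹) ^ 2 + 4 * Real.sin (θ / 2) ^ 2))⁻¹

/-- Riemann zeta function (for real `s > 1`, via its Dirichlet series). -/
def zetaR (s : ℝ) : ℝ := ∑' n : ℕ, ((n : ℝ) + 1) ^ (-s)

/-- Operator (spectral) norm of a 2×2 real matrix w.r.t. the Euclidean norm. -/
def opNorm2 (M : Matrix (Fin 2) (Fin 2) ℝ) : ℝ :=
  ⨆ x : {x : Fin 2 → ℝ // norm2 x ≤ 1}, norm2 (M.mulVec x.1)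

/-- Embedding `ℝ² ↪ ℝ³`, `x ↦ (x, 0)`. -/
def emb (x : Fin 2 → ℝ) : Fin 3 → ℝ := ![x 0, x 1, 0]

/-- Japanese bracket `⟨x⟩ = (1 + |x|²)^{1/2}` on `ℝ³`. -/
def jap3 (x : Fin 3 → ℝ) : ℝ := Real.sqrt (1 + norm3 x ^ 2)

/-- The region `ℝ² × [−L, L] ⊆ ℝ³`. -/
def slab (L : ℝ) : Set (Fin 3 → ℝ) := {x | x 2 ∈ Set.Icc (-L) L}

/-- Euclidean inner product on `ℝ²`. -/
def dot2 (a b : Fin 2 → ℝ) : ℝ := ∑ i, a i * b i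

/-- The index box `⟦−N, N⟧²`. -/
def box (N : ℕ) : Finset (Fin 2 → ℤ) :=
  Finset.Icc (fun _ => -(N : ℤ)) (fun _ => (N : ℤ))

/-- The normalized Dirichlet kernel `Δ_N^j` of the lattice `A_j ℤ²`. -/
def Dir (Aj : Matrix (Fin 2) (Fin 2) ℝ) (N : ℕ) (G : Fin 2 → ℝ) : ℂ :=
  (((2 * N + 1 : ℝ)) ^ 2)⁻¹ •
    ∑ n ∈ box N, Complex.exp (Complex.I * (dot2 G (Aj.mulVec (iv n)) : ℝ))

/-!
Modulo the moiré lattice in the first variable and the lattice `A' ℤ²` in the second, `h` is a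
function on `𝕋² × 𝕋²`. In these coordinates, translation of both variables by the layer vector `A n`
is translation by `(c n, c n)`, where `c n` is the class of `A'⁻¹ A n`: the moiré matrix is, up to
sign, the inverse of `A'⁻¹ - A⁻¹`, and `A⁻¹ A n` is an integer vector. Incommensurability of the
reciprocal lattices says that no nontrivial character of `𝕋²` is constant along `c`, hence `c` is
equidistributed (Weyl). So the orbit means of a bounded continuous function converge everywhere to
its average along the diagonal action of `𝕋²`; the maximal inequality for cube means carries this
over to integrable functions, almost everywhere and in `L¹`. The three averages in the conclusion
are three parametrizations of the same orbit of the diagonal action.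
-/

section Cubes

open scoped Finset

variable {ι : Type*} [Fintype ι] [DecidableEq ι]

/-- The cube of points of `ℤ^ι` at sup-distance at most `N` from `a`, written as an order interval
so that it is a `Finset`. -/
def intCube (a : ι → ℤ) (N : ℕ) : Finset (ι → ℤ) :=
  Finset.Icc (fun i ↦ a i - N) (fun i ↦ a i + N)

lemma mem_intCube {a n : ι → ℤ} {N : ℕ} : n ∈ intCube a N ↔ dist n a ≤ N := by
  simp only [intCube, Finset.mem_Icc, Pi.le_def, ← forall_and,
    dist_pi_le_iff (Nat.cast_nonneg (α := ℝ) N)]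
  refine forall_congr' fun i ↦ ?_
  rw [Int.dist_eq, ← Int.cast_sub, ← Int.cast_abs, ← Int.cast_natCast (R := ℝ) N, Int.cast_le,
    abs_sub_le_iff]
  omega

lemma card_intCube (a : ι → ℤ) (N : ℕ) : #(intCube a N) = (2 * N + 1) ^ Fintype.card ι := by
  simp only [intCube, Pi.card_Icc, Int.card_Icc]
  rw [Finset.prod_eq_pow_card (b := 2 * N + 1) fun i _ ↦ by omega, Finset.card_univ]

lemma card_intCube_pos (a : ι → ℤ) (N : ℕ) : 0 < #(intCube a N) := by
  rw [card_intCube]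
  positivity

lemma card_intCube_mul_le (a b : ι → ℤ) (k N : ℕ) (hk : k ≠ 0) :
    #(intCube a (k * N)) ≤ k ^ Fintype.card ι * #(intCube b N) := by
  rw [card_intCube, card_intCube, ← mul_pow]
  refine Nat.pow_le_pow_left ?_ _
  have := Nat.one_le_iff_ne_zero.2 hk
  linarith

lemma intCube_subset_intCube {a b : ι → ℤ} {N r : ℕ} (h : dist a b ≤ r) :
    intCube a N ⊆ intCube b (N + r) := fun n hn ↦ by
  rw [mem_intCube] at hn ⊢
  push_cast
  exact (dist_triangle n a b).trans (add_le_add hn h)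

lemma sum_intCube {M : Type*} [AddCommMonoid M] (f : (ι → ℤ) → M) (a : ι → ℤ) (N : ℕ) :
    ∑ n ∈ intCube a N, f n = ∑ n ∈ intCube 0 N, f (n + a) := by
  refine (Finset.sum_equiv (Equiv.addRight a) (fun n ↦ ?_) fun n _ ↦ rfl).symm
  rw [mem_intCube, mem_intCube, Equiv.coe_addRight, dist_eq_norm, dist_eq_norm, sub_zero,
    add_sub_cancel_right]

lemma tendsto_card_intCube_add_div (r : ℕ) :
    Tendsto (fun N : ℕ ↦ (#(intCube (0 : ι → ℤ) (N + r)) / #(intCube (0 : ι → ℤ) N) : ℝ))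
      atTop (𝓝 1) := by
  have h : Tendsto (fun N : ℕ ↦ 1 + (r : ℝ) / (N + 1 / 2)) atTop (𝓝 1) := by
    simpa only [add_zero] using
      (tendsto_const_nhds (x := (r : ℝ))).div_atTop
        (tendsto_natCast_atTop_atTop.atTop_add (tendsto_const_nhds (x := (1 / 2 : ℝ))))
        |>.const_add 1
  convert h.pow (Fintype.card ι) using 2 with N
  · rw [card_intCube, card_intCube, Nat.cast_pow, Nat.cast_pow, ← div_pow]
    congr 1
    push_cast
    field_simp
    ring
  · rw [one_pow]

end Cubes

section CubeMeans

open scoped Finset ENNReal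

variable {ι : Type*} [Fintype ι] [DecidableEq ι] {E : Type*} [NormedAddCommGroup E]
  [NormedSpace ℝ E]

/-- The arithmetic mean of a family indexed by `ℤ^ι` over the cube `⟦-N, N⟧^ι`. -/
def cubeMean (a : (ι → ℤ) → E) (N : ℕ) : E :=
  (#(intCube (0 : ι → ℤ) N) : ℝ)⁻¹ • ∑ n ∈ intCube 0 N, a n

lemma cubeMean_sub (a b : (ι → ℤ) → E) (N : ℕ) :
    cubeMean (fun n ↦ a n - b n) N = cubeMean a N - cubeMean b N := by
  simp only [cubeMean, Finset.sum_sub_distrib, smul_sub]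

lemma cubeMean_add (a b : (ι → ℤ) → E) (N : ℕ) :
    cubeMean (fun n ↦ a n + b n) N = cubeMean a N + cubeMean b N := by
  simp only [cubeMean, Finset.sum_add_distrib, smul_add]

lemma cubeMean_map {E' : Type*} [NormedAddCommGroup E'] [NormedSpace ℝ E'] (L : E →ₗ[ℝ] E')
    (a : (ι → ℤ) → E) (N : ℕ) : cubeMean (fun n ↦ L (a n)) N = L (cubeMean a N) := by
  simp only [cubeMean, map_smul, map_sum]

lemma cubeMean_const (c : E) (N : ℕ) : cubeMean (fun _ : ι → ℤ ↦ c) N = c := by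
  rw [cubeMean, Finset.sum_const, ← Nat.cast_smul_eq_nsmul ℝ,
    inv_smul_smul₀ (Nat.cast_ne_zero.2 (card_intCube_pos _ _).ne')]

lemma enorm_cubeMean_le (a : (ι → ℤ) → E) (N : ℕ) :
    ‖cubeMean a N‖ₑ ≤ (#(intCube (0 : ι → ℤ) N) : ℝ≥0∞)⁻¹ * ∑ n ∈ intCube 0 N, ‖a n‖ₑ := by
  rw [cubeMean, enorm_smul, enorm_inv (Nat.cast_ne_zero.2 (card_intCube_pos _ _).ne'),
    enorm_eq_nnnorm, Real.nnnorm_natCast, ENNReal.coe_natCast]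
  gcongr
  exact enorm_sum_le _ _

lemma norm_cubeMean_le {a : (ι → ℤ) → E} {C : ℝ} (ha : ∀ n, ‖a n‖ ≤ C) (N : ℕ) :
    ‖cubeMean a N‖ ≤ C := by
  rw [cubeMean, norm_smul, norm_inv, Real.norm_natCast, inv_mul_le_iff₀
    (Nat.cast_pos.2 (card_intCube_pos _ _)), ← nsmul_eq_mul]
  exact norm_sum_le_of_le _ (fun n _ ↦ ha n) |>.trans_eq (Finset.sum_const C)

/-- Cubes form a Følner sequence: the symmetric difference of a cube of side `2N+1` and its
translate by `m` lies in a shell of bounded thickness around it. -/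
lemma tendsto_cubeMean_add_sub {a : (ι → ℤ) → E} {C : ℝ} (ha : ∀ n, ‖a n‖ ≤ C) (m : ι → ℤ) :
    Tendsto (fun N ↦ cubeMean (fun n ↦ a (n + m)) N - cubeMean a N) atTop (𝓝 0) := by
  obtain ⟨r, hr⟩ := exists_nat_ge (dist m 0)
  have hshell (b c : ι → ℤ) (hbc : dist b c ≤ r) (N : ℕ) :
      ‖∑ n ∈ intCube b N \ intCube c N, a n‖ ≤
        (#(intCube (0 : ι → ℤ) (N + r)) - #(intCube (0 : ι → ℤ) N) : ℝ) * C := by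
    have hsub := Finset.sdiff_subset_sdiff (intCube_subset_intCube (N := N) hbc)
      (Finset.Subset.refl (intCube c N))
    have hC : 0 ≤ C := (norm_nonneg _).trans (ha 0)
    calc ‖∑ n ∈ intCube b N \ intCube c N, a n‖
        ≤ #(intCube b N \ intCube c N) * C := by
          rw [← nsmul_eq_mul]
          exact (norm_sum_le_of_le _ fun n _ ↦ ha n).trans_eq (Finset.sum_const C)
      _ ≤ #(intCube c (N + r) \ intCube c N) * C := by
          gcongr
      _ = _ := by
          rw [Finset.cast_card_sdiff
            (intCube_subset_intCube ((dist_self c).trans_le r.cast_nonneg))]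
          simp only [card_intCube]
  have hlim : Tendsto (fun N ↦ (#(intCube (0 : ι → ℤ) (N + r)) / #(intCube (0 : ι → ℤ) N) - 1 : ℝ)
      * C + (#(intCube (0 : ι → ℤ) (N + r)) / #(intCube (0 : ι → ℤ) N) - 1 : ℝ) * C)
      atTop (𝓝 0) := by
    simpa only [sub_self, zero_mul, add_zero] using
      (((tendsto_card_intCube_add_div r).sub_const 1).mul_const C).add
        (((tendsto_card_intCube_add_div r).sub_const 1).mul_const C)
  refine squeeze_zero_norm (fun N ↦ ?_) hlim
  have hpos : (0 : ℝ) < #(intCube (0 : ι → ℤ) N) := Nat.cast_pos.2 (card_intCube_pos _ _)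
  rw [cubeMean, cubeMean, ← sum_intCube a m, ← smul_sub, ← Finset.sum_sdiff_sub_sum_sdiff,
    norm_smul, norm_inv, Real.norm_natCast, inv_mul_le_iff₀ hpos]
  refine (norm_sub_le_of_le (hshell m 0 hr N) (hshell 0 m (dist_comm m 0 ▸ hr) N)).trans_eq ?_
  field_simp

lemma tendsto_cubeMean_addChar {χ : AddChar (ι → ℤ) ℂ} {C : ℝ} (hC : ∀ n, ‖χ n‖ ≤ C)
    (hχ : χ ≠ 1) : Tendsto (cubeMean χ) atTop (𝓝 0) := by
  obtain ⟨m, hm⟩ := AddChar.ne_one_iff.1 hχ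
  have hshift : ∀ N, cubeMean (fun n ↦ χ (n + m)) N - cubeMean χ N = cubeMean χ N * (χ m - 1) := by
    intro N
    simp only [cubeMean, AddChar.map_add_eq_mul, ← Finset.sum_mul, smul_mul_assoc, mul_sub, mul_one]
  have h := (tendsto_cubeMean_add_sub hC m).div_const (χ m - 1)
  simp only [hshift, mul_div_cancel_right₀ _ (sub_ne_zero.2 hm), zero_div] at h
  exact h

end CubeMeans

section MaximalInequality

open scoped Finset ENNReal

section InvariantMeasure

variable {K X : Type*} [AddGroup K] [AddAction K X] [MeasurableSpace X] [MeasurableConstVAdd K X]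
  {μ : Measure X} [VAddInvariantMeasure K X μ]

lemma aemeasurable_comp_vadd {φ : X → ℝ≥0∞} (hφ : AEMeasurable φ μ) (g : K) :
    AEMeasurable (fun x ↦ φ (g +ᵥ x)) μ :=
  hφ.comp_quasiMeasurePreserving (measurePreserving_vadd g μ).quasiMeasurePreserving

lemma lintegral_sum_vadd {α : Type*} (g : α → K) {φ : X → ℝ≥0∞} (hφ : AEMeasurable φ μ)
    (s : Finset α) : ∫⁻ x, ∑ n ∈ s, φ (g n +ᵥ x) ∂μ = #s * ∫⁻ x, φ x ∂μ := by
  rw [lintegral_finsetSum' s fun n _ ↦ aemeasurable_comp_vadd hφ (g n), ← nsmul_eq_mul]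
  exact Finset.sum_eq_card_nsmul fun n _ ↦
    (measurePreserving_vadd (g n) μ).lintegral_comp_emb (measurableEmbedding_const_vadd (g n)) φ

end InvariantMeasure

variable {ι : Type*} [Fintype ι] [DecidableEq ι]

lemma exists_pairwiseDisjoint_intCube_card_le (S : Finset (ι → ℤ)) (r : (ι → ℤ) → ℕ) :
    ∃ u ⊆ S, (u : Set (ι → ℤ)).PairwiseDisjoint (fun a ↦ intCube a (r a)) ∧
      #S ≤ 5 ^ Fintype.card ι * ∑ a ∈ u, #(intCube a (r a)) := by
  obtain ⟨u, huS, hdisj, hcov⟩ := Vitali.exists_disjoint_subfamily_covering_enlargement_closedBall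
    (S : Set (ι → ℤ)) id (fun a ↦ (r a : ℝ)) (∑ a ∈ S, (r a : ℝ))
    (fun a ha ↦ Finset.single_le_sum (fun b _ ↦ (r b).cast_nonneg) ha) 5 (by norm_num)
  lift u to Finset (ι → ℤ) using S.finite_toSet.subset huS
  refine ⟨u, Finset.coe_subset.1 huS, fun a ha b hb hab ↦ ?_, ?_⟩
  · exact Finset.disjoint_left.2 fun n hna hnb ↦
      Set.disjoint_left.1 (hdisj ha hb hab) (mem_intCube.1 hna) (mem_intCube.1 hnb)
  · have hsub : S ⊆ u.biUnion fun b ↦ intCube b (5 * r b) := fun a ha ↦ by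
      obtain ⟨b, hb, hab⟩ := hcov a ha
      refine Finset.mem_biUnion.2 ⟨b, hb, mem_intCube.2 ?_⟩
      push_cast
      exact hab (Metric.mem_closedBall_self (r a).cast_nonneg)
    rw [Finset.mul_sum]
    exact (Finset.card_le_card hsub).trans <| Finset.card_biUnion_le.trans <|
      Finset.sum_le_sum fun b _ ↦ card_intCube_mul_le b b 5 (r b) (by norm_num)

lemma mul_card_le_of_forall_mul_card_intCube_le_sum {f : (ι → ℤ) → ℝ≥0∞} {t : ℝ≥0∞}
    {S K : Finset (ι → ℤ)} {r : (ι → ℤ) → ℕ} (hK : ∀ a ∈ S, intCube a (r a) ⊆ K)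
    (hr : ∀ a ∈ S, t * #(intCube a (r a)) ≤ ∑ n ∈ intCube a (r a), f n) :
    t * #S ≤ 5 ^ Fintype.card ι * ∑ n ∈ K, f n := by
  obtain ⟨u, huS, hdisj, hcard⟩ := exists_pairwiseDisjoint_intCube_card_le S r
  calc t * #S ≤ t * (5 ^ Fintype.card ι * ∑ a ∈ u, #(intCube a (r a)) : ℕ) := by gcongr
    _ = 5 ^ Fintype.card ι * ∑ a ∈ u, t * #(intCube a (r a)) := by
      push_cast
      rw [mul_left_comm, Finset.mul_sum]
    _ ≤ 5 ^ Fintype.card ι * ∑ a ∈ u, ∑ n ∈ intCube a (r a), f n := by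
      gcongr with a ha
      exact hr a (huS ha)
    _ = 5 ^ Fintype.card ι * ∑ n ∈ u.biUnion fun a ↦ intCube a (r a), f n := by
      rw [Finset.sum_biUnion hdisj]
    _ ≤ 5 ^ Fintype.card ι * ∑ n ∈ K, f n := by
      gcongr
      exact Finset.biUnion_subset.2 fun a ha ↦ hK a (huS ha)

variable {K X : Type*} [AddGroup K] [AddAction K X]

/-- The maximal function of `φ` with respect to the cube means along the orbits of `ℤ^ι`, which acts
on `X` through a homomorphism `c` into a group acting on `X`. -/
def cubeMaximal (c : (ι → ℤ) →+ K) (φ : X → ℝ≥0∞) (x : X) : ℝ≥0∞ :=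
  ⨆ N : ℕ, (#(intCube (0 : ι → ℤ) N) : ℝ≥0∞)⁻¹ * ∑ n ∈ intCube 0 N, φ (c n +ᵥ x)

lemma lt_cubeMaximal_iff {c : (ι → ℤ) →+ K} {φ : X → ℝ≥0∞} {x : X} {t : ℝ≥0∞} :
    t < cubeMaximal c φ x ↔
      ∃ N : ℕ, t * #(intCube (0 : ι → ℤ) N) < ∑ n ∈ intCube 0 N, φ (c n +ᵥ x) := by
  rw [cubeMaximal, lt_iSup_iff]
  refine exists_congr fun N ↦ ?_
  rw [mul_comm _ (Finset.sum _ _), ← div_eq_mul_inv, ENNReal.lt_div_iff_mul_lt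
    (.inl (Nat.cast_ne_zero.2 (card_intCube_pos _ _).ne')) (.inl (ENNReal.natCast_ne_top _))]

/-- Every visit of the orbit of `x` to the exceptional set `s` during the time window
`⟦-M, M⟧^ι` is witnessed by a cube inside `⟦-2M, 2M⟧^ι`. -/
lemma mul_sum_indicator_le {c : (ι → ℤ) →+ K} {φ : X → ℝ≥0∞} {t : ℝ≥0∞} {M : ℕ} {s : Set X}
    (hs : ∀ x ∈ s, ∃ N ≤ M, t * #(intCube (0 : ι → ℤ) N) ≤ ∑ n ∈ intCube 0 N, φ (c n +ᵥ x))
    (x : X) :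
    t * ∑ n ∈ intCube (0 : ι → ℤ) M, s.indicator 1 (c n +ᵥ x) ≤
      5 ^ Fintype.card ι * ∑ n ∈ intCube (0 : ι → ℤ) (2 * M), φ (c n +ᵥ x) := by
  classical
  have hvisits : ∑ n ∈ intCube (0 : ι → ℤ) M, s.indicator (1 : X → ℝ≥0∞) (c n +ᵥ x) =
      #{n ∈ intCube (0 : ι → ℤ) M | c n +ᵥ x ∈ s} := by
    simp only [Finset.card_filter, Nat.cast_sum, Nat.cast_ite, Nat.cast_one, Nat.cast_zero,
      Set.indicator_apply, Pi.one_apply]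
  choose! r hrM hr using hs
  rw [hvisits]
  refine mul_card_le_of_forall_mul_card_intCube_le_sum (r := fun n ↦ r (c n +ᵥ x))
    (fun a ha n hn ↦ ?_) fun a ha ↦ ?_
  · rw [Finset.mem_filter, mem_intCube] at ha
    rw [mem_intCube] at hn ⊢
    have : (r (c a +ᵥ x) : ℝ) ≤ M := Nat.cast_le.2 (hrM _ ha.2)
    push_cast
    linarith [dist_triangle n a 0, ha.1]
  · simpa only [sum_intCube _ a, card_intCube, vadd_vadd, map_add] using
      hr _ (Finset.mem_filter.1 ha).2

variable [MeasurableSpace X] [MeasurableConstVAdd K X] {μ : Measure X} [VAddInvariantMeasure K X μ]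

lemma mul_measure_le_of_forall_exists_le (c : (ι → ℤ) →+ K) {φ : X → ℝ≥0∞} (hφ : AEMeasurable φ μ)
    {t : ℝ≥0∞} {M : ℕ} {s : Set X} (hsm : NullMeasurableSet s μ)
    (hs : ∀ x ∈ s, ∃ N ≤ M, t * #(intCube (0 : ι → ℤ) N) ≤ ∑ n ∈ intCube 0 N, φ (c n +ᵥ x)) :
    t * μ s ≤ 10 ^ Fintype.card ι * ∫⁻ x, φ x ∂μ := by
  have hind : AEMeasurable (s.indicator (1 : X → ℝ≥0∞)) μ := aemeasurable_one.indicator₀ hsm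
  have hM : (#(intCube (0 : ι → ℤ) M) : ℝ≥0∞) ≠ 0 :=
    Nat.cast_ne_zero.2 (card_intCube_pos _ _).ne'
  rw [← ENNReal.mul_le_mul_iff_right hM (ENNReal.natCast_ne_top _)]
  calc #(intCube (0 : ι → ℤ) M) * (t * μ s)
      = ∫⁻ x, t * ∑ n ∈ intCube (0 : ι → ℤ) M, s.indicator 1 (c n +ᵥ x) ∂μ := by
        rw [lintegral_const_mul'' _ (Finset.aemeasurable_fun_sum _ fun n _ ↦
          aemeasurable_comp_vadd hind (c n)), lintegral_sum_vadd c hind,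
          lintegral_indicator_one₀ hsm, mul_left_comm]
    _ ≤ ∫⁻ x, 5 ^ Fintype.card ι * ∑ n ∈ intCube (0 : ι → ℤ) (2 * M), φ (c n +ᵥ x) ∂μ :=
        lintegral_mono fun x ↦ mul_sum_indicator_le hs x
    _ = 5 ^ Fintype.card ι * (#(intCube (0 : ι → ℤ) (2 * M)) * ∫⁻ x, φ x ∂μ) := by
        rw [lintegral_const_mul' _ _ (by finiteness), lintegral_sum_vadd c hφ]
    _ ≤ 5 ^ Fintype.card ι * ((2 ^ Fintype.card ι * #(intCube (0 : ι → ℤ) M) : ℕ) *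
          ∫⁻ x, φ x ∂μ) := by
        gcongr
        exact card_intCube_mul_le 0 0 2 M two_ne_zero
    _ = _ := by
        push_cast
        rw [show (10 : ℝ≥0∞) = 5 * 2 by norm_num, mul_pow]
        ring

/-- The weak type `(1, 1)` maximal inequality. -/
theorem mul_measure_lt_cubeMaximal_le (c : (ι → ℤ) →+ K) {φ : X → ℝ≥0∞} (hφ : AEMeasurable φ μ)
    (t : ℝ≥0∞) :
    t * μ {x | t < cubeMaximal c φ x} ≤ 10 ^ Fintype.card ι * ∫⁻ x, φ x ∂μ := by
  let s (M : ℕ) : Set X :=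
    {x | ∃ N ≤ M, t * #(intCube (0 : ι → ℤ) N) < ∑ n ∈ intCube 0 N, φ (c n +ᵥ x)}
  have hunion : {x | t < cubeMaximal c φ x} = ⋃ M, s M := by
    ext x
    simp only [Set.mem_ofPred_eq, lt_cubeMaximal_iff, Set.mem_iUnion, s]
    exact ⟨fun ⟨N, hN⟩ ↦ ⟨N, N, le_rfl, hN⟩, fun ⟨_, N, _, hN⟩ ↦ ⟨N, hN⟩⟩
  have hmono : Monotone s := fun M M' hM x ⟨N, hNM, hN⟩ ↦ ⟨N, hNM.trans hM, hN⟩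
  have hmeas (M : ℕ) : NullMeasurableSet (s M) μ := by
    have : s M = ⋃ N ∈ Set.Iic M,
        {x | t * #(intCube (0 : ι → ℤ) N) < ∑ n ∈ intCube 0 N, φ (c n +ᵥ x)} := by
      ext x
      simp only [s, Set.mem_ofPred_eq, Set.mem_iUnion, Set.mem_Iic, exists_prop]
    rw [this]
    exact .biUnion (Set.to_countable _) fun N _ ↦ nullMeasurableSet_lt aemeasurable_const <|
      Finset.aemeasurable_fun_sum _ fun n _ ↦ aemeasurable_comp_vadd hφ (c n)
  rw [hunion, hmono.measure_iUnion, ENNReal.mul_iSup]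
  exact iSup_le fun M ↦ mul_measure_le_of_forall_exists_le c hφ (hmeas M)
    fun x ⟨N, hNM, hN⟩ ↦ ⟨N, hNM, hN.le⟩

end MaximalInequality

section ErgodicLimits

open scoped Finset ENNReal

variable {ι K X E : Type*} [Fintype ι] [DecidableEq ι] [AddGroup K] [AddAction K X]
  [NormedAddCommGroup E] [NormedSpace ℝ E] {c : (ι → ℤ) →+ K} {F g : X → E}

/-- The mean of `F` over the part `{c n +ᵥ x | n ∈ ⟦-N, N⟧^ι}` of the orbit of `x`. -/
def orbitMean (c : (ι → ℤ) →+ K) (F : X → E) (N : ℕ) (x : X) : E :=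
  cubeMean (fun n ↦ F (c n +ᵥ x)) N

lemma orbitMean_sub (F g : X → E) (N : ℕ) :
    orbitMean c (F - g) N = orbitMean c F N - orbitMean c g N :=
  funext fun _ ↦ cubeMean_sub _ _ N

lemma enorm_orbitMean_le_cubeMaximal (F : X → E) (N : ℕ) (x : X) :
    ‖orbitMean c F N x‖ₑ ≤ cubeMaximal c (fun z ↦ ‖F z‖ₑ) x :=
  (enorm_cubeMean_le _ N).trans <| le_iSup (fun N ↦ (#(intCube (0 : ι → ℤ) N) : ℝ≥0∞)⁻¹ *
    ∑ n ∈ intCube 0 N, ‖F (c n +ᵥ x)‖ₑ) N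

lemma limsup_enorm_orbitMean_sub_le {x : X} {y y' : E}
    (hg : Tendsto (orbitMean c g · x) atTop (𝓝 y')) :
    limsup (fun N ↦ ‖orbitMean c F N x - y‖ₑ) atTop ≤
      cubeMaximal c (fun z ↦ ‖(F - g) z‖ₑ) x + ‖y - y'‖ₑ := by
  have hlim : Tendsto (fun N ↦ cubeMaximal c (fun z ↦ ‖(F - g) z‖ₑ) x +
      ‖orbitMean c g N x - y‖ₑ) atTop (𝓝 (cubeMaximal c (fun z ↦ ‖(F - g) z‖ₑ) x + ‖y - y'‖ₑ)) := by
    rw [← enorm_neg (y - y'), neg_sub]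
    exact (hg.sub_const y).enorm.const_add _
  rw [← hlim.limsup_eq]
  refine limsup_le_limsup (.of_forall fun N ↦ ?_)
  calc ‖orbitMean c F N x - y‖ₑ
      = ‖orbitMean c (F - g) N x + (orbitMean c g N x - y)‖ₑ := by
        rw [orbitMean_sub, Pi.sub_apply, sub_add_sub_cancel]
    _ ≤ _ := (enorm_add_le _ _).trans
        (add_le_add_left (enorm_orbitMean_le_cubeMaximal _ N x) _)

variable [MeasurableSpace X]

/-- The orbit means of `F` converge to `Q`, both almost everywhere and in `L¹`. -/
structure HasErgodicLimit (c : (ι → ℤ) →+ K) (μ : Measure X) (F Q : X → E) : Prop where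
  ae_tendsto : ∀ᵐ x ∂μ, Tendsto (orbitMean c F · x) atTop (𝓝 (Q x))
  tendsto_eLpNorm : Tendsto (fun N ↦ eLpNorm (orbitMean c F N - Q) 1 μ) atTop (𝓝 0)

variable [MeasurableConstVAdd K X] {μ : Measure X} [VAddInvariantMeasure K X μ]

lemma aestronglyMeasurable_orbitMean (hF : AEStronglyMeasurable F μ) (N : ℕ) :
    AEStronglyMeasurable (orbitMean c F N) μ :=
  (Finset.aestronglyMeasurable_fun_sum (intCube 0 N) fun n _ ↦
    hF.comp_measurePreserving (measurePreserving_vadd (c n) μ)).const_smul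
      (#(intCube (0 : ι → ℤ) N) : ℝ)⁻¹

lemma eLpNorm_orbitMean_le (hF : AEStronglyMeasurable F μ) (N : ℕ) :
    eLpNorm (orbitMean c F N) 1 μ ≤ eLpNorm F 1 μ := by
  simp only [eLpNorm_one_eq_lintegral_enorm]
  calc ∫⁻ x, ‖orbitMean c F N x‖ₑ ∂μ
      ≤ ∫⁻ x, (#(intCube (0 : ι → ℤ) N) : ℝ≥0∞)⁻¹ * ∑ n ∈ intCube 0 N, ‖F (c n +ᵥ x)‖ₑ ∂μ :=
        lintegral_mono fun x ↦ enorm_cubeMean_le _ N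
    _ = ∫⁻ x, ‖F x‖ₑ ∂μ := by
        have h0 : (#(intCube (0 : ι → ℤ) N) : ℝ≥0∞) ≠ 0 :=
          Nat.cast_ne_zero.2 (card_intCube_pos _ _).ne'
        rw [lintegral_const_mul' _ _ (ENNReal.inv_ne_top.2 h0), lintegral_sum_vadd c hF.enorm,
          ENNReal.inv_mul_cancel_left h0 (ENNReal.natCast_ne_top _)]

variable {Q : X → E}

lemma mul_measure_two_mul_lt_limsup_le (hF : AEStronglyMeasurable F μ)
    (hQ : AEStronglyMeasurable Q μ) {q : X → E} (hg : AEStronglyMeasurable g μ)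
    (hq : AEStronglyMeasurable q μ) (hlim : ∀ᵐ x ∂μ, Tendsto (orbitMean c g · x) atTop (𝓝 (q x)))
    (t : ℝ≥0∞) :
    t * μ {x | 2 * t < limsup (fun N ↦ ‖orbitMean c F N x - Q x‖ₑ) atTop} ≤
      10 ^ Fintype.card ι * eLpNorm (F - g) 1 μ + eLpNorm (Q - q) 1 μ := by
  simp only [eLpNorm_one_eq_lintegral_enorm]
  have hcover : ∀ᵐ x ∂μ, 2 * t < limsup (fun N ↦ ‖orbitMean c F N x - Q x‖ₑ) atTop →
      x ∈ {x | t < cubeMaximal c (fun z ↦ ‖(F - g) z‖ₑ) x} ∪ {x | t ≤ ‖(Q - q) x‖ₑ} := by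
    filter_upwards [hlim] with x hx hLx
    by_contra hcon
    rw [Set.mem_union, not_or] at hcon
    refine (limsup_enorm_orbitMean_sub_le hx).not_gt (hLx.trans_le' ?_)
    rw [two_mul]
    exact add_le_add (not_lt.1 hcon.1) (not_le.1 hcon.2).le
  calc t * μ {x | 2 * t < limsup (fun N ↦ ‖orbitMean c F N x - Q x‖ₑ) atTop}
      ≤ t * (μ {x | t < cubeMaximal c (fun z ↦ ‖(F - g) z‖ₑ) x} + μ {x | t ≤ ‖(Q - q) x‖ₑ}) := by
        gcongr
        exact (measure_mono_ae hcover).trans (measure_union_le _ _)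
    _ ≤ 10 ^ Fintype.card ι * ∫⁻ x, ‖(F - g) x‖ₑ ∂μ + ∫⁻ x, ‖(Q - q) x‖ₑ ∂μ := by
        rw [mul_add]
        exact add_le_add (mul_measure_lt_cubeMaximal_le c (hF.sub hg).enorm t)
          (mul_meas_ge_le_lintegral₀ (hQ.sub hq).enorm t)

lemma ae_tendsto_orbitMean_of_approx (hF : AEStronglyMeasurable F μ)
    (hQ : AEStronglyMeasurable Q μ)
    (happrox : ∀ ε ≠ 0, ∃ g q : X → E, AEStronglyMeasurable g μ ∧ AEStronglyMeasurable q μ ∧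
      eLpNorm (F - g) 1 μ ≤ ε ∧ eLpNorm (Q - q) 1 μ ≤ ε ∧
      ∀ᵐ x ∂μ, Tendsto (orbitMean c g · x) atTop (𝓝 (q x))) :
    ∀ᵐ x ∂μ, Tendsto (orbitMean c F · x) atTop (𝓝 (Q x)) := by
  have hzero (t : ℝ≥0∞) (ht : 0 < t) :
      μ {x | 2 * t < limsup (fun N ↦ ‖orbitMean c F N x - Q x‖ₑ) atTop} = 0 := by
    refine (mul_eq_zero.1 (nonpos_iff_eq_zero.1 (ENNReal.le_of_forall_pos_le_add
      fun δ hδ _ ↦ ?_))).resolve_left ht.ne'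
    obtain ⟨g, q, hg, hq, hFg, hQq, hlim⟩ := happrox (δ / (10 ^ Fintype.card ι + 1))
      (ENNReal.div_pos (ENNReal.coe_ne_zero.2 hδ.ne') (by finiteness)).ne'
    rw [zero_add]
    calc _ ≤ 10 ^ Fintype.card ι * eLpNorm (F - g) 1 μ + eLpNorm (Q - q) 1 μ :=
          mul_measure_two_mul_lt_limsup_le hF hQ hg hq hlim t
      _ ≤ (10 ^ Fintype.card ι + 1) * (δ / (10 ^ Fintype.card ι + 1)) := by
          rw [add_mul, one_mul]
          gcongr
      _ ≤ δ := ENNReal.mul_div_le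
  have hlimsup : ∀ᵐ x ∂μ, limsup (fun N ↦ ‖orbitMean c F N x - Q x‖ₑ) atTop ≤ 0 := by
    refine (ae_le_const_iff_forall_gt_measure_zero _ _).2 fun t ht ↦ ?_
    obtain ⟨s, hs, hst⟩ := exists_between ht
    refine measure_mono_null (fun x hx ↦ ?_) (hzero (s / 2) (ENNReal.half_pos hs.ne'))
    rw [Set.mem_ofPred_eq, ENNReal.mul_div_cancel two_ne_zero ENNReal.ofNat_ne_top]
    exact hst.trans_le hx
  filter_upwards [hlimsup] with x hx
  refine tendsto_iff_edist_tendsto_0.2 ?_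
  simp only [edist_eq_enorm_sub]
  exact tendsto_of_le_liminf_of_limsup_le bot_le hx

theorem HasErgodicLimit.of_approx (hF : AEStronglyMeasurable F μ) (hQ : AEStronglyMeasurable Q μ)
    (happrox : ∀ ε ≠ 0, ∃ g q : X → E, AEStronglyMeasurable g μ ∧ AEStronglyMeasurable q μ ∧
      eLpNorm (F - g) 1 μ ≤ ε ∧ eLpNorm (Q - q) 1 μ ≤ ε ∧ HasErgodicLimit c μ g q) :
    HasErgodicLimit c μ F Q where
  ae_tendsto := ae_tendsto_orbitMean_of_approx hF hQ fun ε hε ↦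
    let ⟨g, q, hg, hq, hFg, hQq, hlim⟩ := happrox ε hε
    ⟨g, q, hg, hq, hFg, hQq, hlim.ae_tendsto⟩
  tendsto_eLpNorm := by
    refine ENNReal.tendsto_nhds_zero.2 fun ε hε ↦ ?_
    have hε3 : 0 < ε / 3 := ENNReal.div_pos hε.ne' (by finiteness)
    obtain ⟨g, q, hg, hq, hFg, hQq, hlim⟩ := happrox (ε / 3) hε3.ne'
    filter_upwards [ENNReal.tendsto_nhds_zero.1 hlim.tendsto_eLpNorm (ε / 3) hε3] with N hN
    calc eLpNorm (orbitMean c F N - Q) 1 μ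
        = eLpNorm (orbitMean c (F - g) N + (orbitMean c g N - q) + (q - Q)) 1 μ := by
          rw [orbitMean_sub]
          congr 1
          abel
      _ ≤ eLpNorm (orbitMean c (F - g) N) 1 μ + eLpNorm (orbitMean c g N - q) 1 μ +
            eLpNorm (Q - q) 1 μ := by
          rw [← eLpNorm_sub_comm q Q]
          have hFgN := aestronglyMeasurable_orbitMean (c := c) (hF.sub hg) N
          have hgqN := (aestronglyMeasurable_orbitMean (c := c) hg N).sub hq
          exact (eLpNorm_add_le (hFgN.add hgqN) (hq.sub hQ) le_rfl).trans
            (add_le_add_left (eLpNorm_add_le hFgN hgqN le_rfl) _)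
      _ ≤ ε / 3 + ε / 3 + ε / 3 := by
          gcongr
          exact (eLpNorm_orbitMean_le (hF.sub hg) N).trans hFg
      _ = ε := ENNReal.add_thirds ε

lemma HasErgodicLimit.tendsto_integral_norm_sub (h : HasErgodicLimit c μ F Q)
    (hF : AEStronglyMeasurable F μ) (hQ : AEStronglyMeasurable Q μ) :
    Tendsto (fun N ↦ ∫ x, ‖orbitMean c F N x - Q x‖ ∂μ) atTop (𝓝 0) := by
  have hnorm (N : ℕ) : ∫ x, ‖orbitMean c F N x - Q x‖ ∂μ =
      (eLpNorm (orbitMean c F N - Q) 1 μ).toReal := by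
    rw [eLpNorm_one_eq_lintegral_enorm]
    exact integral_norm_eq_lintegral_enorm ((aestronglyMeasurable_orbitMean hF N).sub hQ)
  simp only [hnorm]
  exact (ENNReal.tendsto_toReal ENNReal.zero_ne_top).comp h.tendsto_eLpNorm

end ErgodicLimits

section Equidistribution

variable {ι : Type*} [Fintype ι] [DecidableEq ι]

/-- A family of points indexed by `ℤ^ι` is equidistributed with respect to `ν` if its means over the
cubes `⟦-N, N⟧^ι` converge to `ν`, tested against real continuous functions. -/
def Equidistributed {K : Type*} [TopologicalSpace K] [MeasurableSpace K] (c : (ι → ℤ) → K)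
    (ν : Measure K) : Prop :=
  ∀ φ : C(K, ℝ), Tendsto (cubeMean fun n ↦ φ (c n)) atTop (𝓝 (∫ v, φ v ∂ν))

section TestFunctions

variable {K : Type*} (𝕜 : Type*) [TopologicalSpace K] [CompactSpace K] [MeasurableSpace K]
  [BorelSpace K] [RCLike 𝕜] (c : (ι → ℤ) → K) (ν : Measure K) [IsFiniteMeasure ν]

/-- The space of continuous functions whose means along `c` converge to their `ν`-integral. -/
def equidistributionTests : Submodule 𝕜 C(K, 𝕜) where
  carrier := {φ | Tendsto (cubeMean fun n ↦ φ (c n)) atTop (𝓝 (∫ v, φ v ∂ν))}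
  zero_mem' := by
    simp only [Set.mem_ofPred_eq, ContinuousMap.zero_apply, integral_zero]
    exact tendsto_const_nhds.congr fun N ↦ (cubeMean_const 0 N).symm
  add_mem' {φ ψ} hφ hψ := by
    have hint (φ : C(K, 𝕜)) : Integrable φ ν :=
      φ.continuous.integrable_of_hasCompactSupport (.of_compactSpace _)
    simp only [Set.mem_ofPred_eq, ContinuousMap.add_apply, integral_add (hint φ) (hint ψ)]
    exact (hφ.add hψ).congr fun N ↦ (cubeMean_add _ _ N).symm
  smul_mem' a φ hφ := by
    simp only [Set.mem_ofPred_eq, ContinuousMap.smul_apply, integral_smul]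
    exact (hφ.const_smul a).congr fun N ↦ (cubeMean_map (LinearMap.mulLeft ℝ a) _ N).symm

variable {𝕜 c ν}

lemma mem_equidistributionTests {φ : C(K, 𝕜)} : φ ∈ equidistributionTests 𝕜 c ν ↔
    Tendsto (cubeMean fun n ↦ φ (c n)) atTop (𝓝 (∫ v, φ v ∂ν)) := Iff.rfl

lemma isClosed_equidistributionTests :
    IsClosed (equidistributionTests 𝕜 c ν : Set C(K, 𝕜)) := by
  have hmean (N : ℕ) : LipschitzWith 1 fun φ : C(K, 𝕜) ↦ cubeMean (fun n ↦ φ (c n)) N :=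
    LipschitzWith.mk_one fun φ ψ ↦ by
      rw [dist_eq_norm, ← cubeMean_sub]
      exact norm_cubeMean_le
        (fun n ↦ (dist_eq_norm (φ (c n)) _).symm.trans_le (ContinuousMap.dist_apply_le_dist _)) N
  have hint : Continuous fun φ : C(K, 𝕜) ↦ ∫ v, φ v ∂ν :=
    (continuous_integral.comp (ContinuousMap.toLp (E := 𝕜) 1 ν 𝕜).continuous).congr fun φ ↦
      integral_congr_ae (ContinuousMap.coeFn_toLp ν φ)
  exact (LipschitzWith.uniformEquicontinuous _ 1 hmean).equicontinuous.isClosed_setOfPred_tendsto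
    hint

lemma equidistributed_of_equidistributionTests_eq_top
    (h : equidistributionTests 𝕜 c ν = ⊤) : Equidistributed c ν := fun φ ↦ by
  let ψ : C(K, 𝕜) := ⟨fun v ↦ (φ v : 𝕜), RCLike.continuous_ofReal.comp φ.continuous⟩
  have hψ : Tendsto (cubeMean fun n ↦ (φ (c n) : 𝕜)) atTop (𝓝 (∫ v, (φ v : 𝕜) ∂ν)) :=
    mem_equidistributionTests.1 (h.ge (Submodule.mem_top (x := ψ)))
  have hre := (RCLike.continuous_re.tendsto _).comp hψ
  rw [integral_ofReal, RCLike.ofReal_re] at hre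
  refine hre.congr fun N ↦ ?_
  rw [Function.comp_apply, ← RCLike.reLm_coe, ← cubeMean_map]
  simp only [RCLike.reLm_coe, RCLike.ofReal_re]

end TestFunctions

lemma integral_addChar_eq_zero {G : Type*} [AddGroup G] [MeasurableSpace G] [MeasurableAdd G]
    {μ : Measure G} [μ.IsAddRightInvariant] {χ : AddChar G ℂ} (hχ : χ ≠ 1) :
    ∫ x, χ x ∂μ = 0 := by
  obtain ⟨a, ha⟩ := AddChar.ne_one_iff.1 hχ
  have h : (∫ x, χ x ∂μ) * χ a = ∫ x, χ x ∂μ := by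
    simp only [← integral_mul_const, ← AddChar.map_add_eq_mul]
    exact integral_add_right_eq_self (fun x ↦ χ x) a
  exact (mul_right_eq_self₀.1 h).resolve_left ha

variable {κ : Type*} [Fintype κ]

instance : IsProbabilityMeasure (volume : Measure (UnitAddTorus κ)) :=
  ⟨by simp only [volume_pi, Measure.pi_univ, AddCircle.measure_univ, ENNReal.ofReal_one,
    Finset.prod_const_one]⟩

/-- The character `x ↦ exp (2πi k·x)` of the torus, that is, `UnitAddTorus.mFourier k` bundled as an
additive character. -/
def torusChar (k : κ → ℤ) : AddChar (UnitAddTorus κ) ℂ where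
  toFun := UnitAddTorus.mFourier k
  map_zero_eq_one' := by
    simp only [UnitAddTorus.mFourier, ContinuousMap.coe_mk, Pi.zero_apply, fourier_eval_zero,
      Finset.prod_const_one]
  map_add_eq_mul' x y := by
    simp only [UnitAddTorus.mFourier, ContinuousMap.coe_mk, ← Finset.prod_mul_distrib,
      Pi.add_apply, fourier_apply, smul_add, AddCircle.toCircle_add, Circle.coe_mul]

lemma norm_torusChar_le (k : κ → ℤ) (x : UnitAddTorus κ) : ‖torusChar k x‖ ≤ 1 :=
  (ContinuousMap.norm_coe_le_norm (UnitAddTorus.mFourier k) x).trans_eq UnitAddTorus.mFourier_norm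

lemma mFourier_mem_equidistributionTests {c : (ι → ℤ) →+ UnitAddTorus κ} {k : κ → ℤ}
    (hc : k ≠ 0 → (torusChar k).compAddMonoidHom c ≠ 1) :
    UnitAddTorus.mFourier k ∈ equidistributionTests ℂ c volume := by
  rw [mem_equidistributionTests]
  obtain rfl | hk := eq_or_ne k 0
  · simp only [UnitAddTorus.mFourier_zero, ContinuousMap.one_apply, integral_const, probReal_univ,
      one_smul]
    exact tendsto_const_nhds.congr fun N ↦ (cubeMean_const 1 N).symm
  · have hχ : torusChar k ≠ 1 := fun h ↦ hc hk (by rw [h]; rfl)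
    have h0 : ∫ v, UnitAddTorus.mFourier k v = 0 := integral_addChar_eq_zero hχ
    rw [h0]
    exact tendsto_cubeMean_addChar (χ := (torusChar k).compAddMonoidHom c)
      (fun n ↦ norm_torusChar_le k (c n)) (hc hk)

/-- **Weyl's criterion** for homomorphisms into the torus. -/
theorem equidistributed_of_forall_torusChar_ne_one {c : (ι → ℤ) →+ UnitAddTorus κ}
    (hc : ∀ k ≠ 0, (torusChar k).compAddMonoidHom c ≠ 1) : Equidistributed c volume := by
  refine equidistributed_of_equidistributionTests_eq_top (𝕜 := ℂ) (top_le_iff.1 ?_)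
  rw [← UnitAddTorus.span_mFourier_closure_eq_top]
  refine Submodule.topologicalClosure_minimal _ (Submodule.span_le.2 ?_)
    isClosed_equidistributionTests
  exact Set.range_subset_iff.2 fun k ↦ mFourier_mem_equidistributionTests (hc k)

end Equidistribution

section CompactGroupActions

variable {ι K X E : Type*} [Fintype ι] [DecidableEq ι] [AddGroup K] [MeasurableSpace K]
  [AddAction K X] [NormedAddCommGroup E] {c : (ι → ℤ) →+ K} {ν : Measure K}

section Integrability

variable [IsProbabilityMeasure ν] [MeasurableSpace X] [MeasurableVAdd₂ K X] {μ : Measure X}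
  [SFinite μ] [VAddInvariantMeasure K X μ] {F g : X → E}

lemma measurePreserving_vadd_prod :
    MeasurePreserving (fun p : K × X ↦ p.1 +ᵥ p.2) (ν.prod μ) μ :=
  measurePreserving_snd.comp <| (MeasurePreserving.id ν).skew_product (g := (· +ᵥ ·))
    measurable_vadd (.of_forall fun v ↦ (measurePreserving_vadd v μ).map_eq)

lemma integrable_vadd_prod (hF : Integrable F μ) :
    Integrable (fun p : K × X ↦ F (p.1 +ᵥ p.2)) (ν.prod μ) :=
  measurePreserving_vadd_prod.integrable_comp_of_integrable hF

variable [NormedSpace ℝ E]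

/-- The average of `F` along the orbit of `x` under the group `K`, weighted by `ν`. -/
def orbitAverage (ν : Measure K) (F : X → E) (x : X) : E :=
  ∫ v, F (v +ᵥ x) ∂ν

lemma integrable_orbitAverage (hF : Integrable F μ) : Integrable (orbitAverage ν F) μ :=
  (integrable_vadd_prod hF).integral_prod_right

lemma eLpNorm_orbitAverage_le (hF : Integrable F μ) :
    eLpNorm (orbitAverage ν F) 1 μ ≤ eLpNorm F 1 μ := by
  have hmp : MeasurePreserving (fun p : K × X ↦ p.1 +ᵥ p.2) (ν.prod μ) μ :=
    measurePreserving_vadd_prod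
  rw [← eLpNorm_comp_measurePreserving hF.1 hmp, eLpNorm_one_eq_lintegral_enorm,
    eLpNorm_one_eq_lintegral_enorm, lintegral_prod_symm _ (hF.1.comp_measurePreserving hmp).enorm]
  exact lintegral_mono fun x ↦ enorm_integral_le_lintegral_enorm _

lemma orbitAverage_sub_ae_eq (hF : Integrable F μ) (hg : Integrable g μ) :
    orbitAverage ν (F - g) =ᵐ[μ] orbitAverage ν F - orbitAverage ν g := by
  filter_upwards [(integrable_vadd_prod (ν := ν) hF).prod_left_ae,
    (integrable_vadd_prod (ν := ν) hg).prod_left_ae] with x hFx hgx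
  exact integral_sub hFx hgx

end Integrability

variable [TopologicalSpace K] [TopologicalSpace X] [ContinuousVAdd K X]

lemma Equidistributed.tendsto_orbitMean {g : X → ℝ} (hc : Equidistributed c ν)
    (hg : Continuous g) (x : X) :
    Tendsto (orbitMean c g · x) atTop (𝓝 (orbitAverage ν g x)) :=
  hc ⟨fun v ↦ g (v +ᵥ x), by fun_prop⟩

variable [MeasurableSpace X] [BorelSpace X] [MeasurableVAdd₂ K X]
  {μ : Measure X} [IsFiniteMeasure μ] [VAddInvariantMeasure K X μ]

open scoped BoundedContinuousFunction in
lemma Equidistributed.hasErgodicLimit_boundedContinuous (hc : Equidistributed c ν) (g : X →ᵇ ℝ) :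
    HasErgodicLimit c μ g (orbitAverage ν g) where
  ae_tendsto := .of_forall (hc.tendsto_orbitMean g.continuous)
  tendsto_eLpNorm := by
    simp only [eLpNorm_one_eq_lintegral_enorm, ← ofReal_norm]
    exact tendsto_lintegral_norm_of_dominated_convergence (bound := fun _ ↦ ‖g‖)
      (aestronglyMeasurable_orbitMean (g.integrable μ).1) (hasFiniteIntegral_const ‖g‖)
      (fun N ↦ .of_forall fun x ↦ norm_cubeMean_le (fun n ↦ g.norm_coe_le_norm _) N)
      (.of_forall (hc.tendsto_orbitMean g.continuous))

theorem Equidistributed.hasErgodicLimit [NormalSpace X] [μ.WeaklyRegular]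
    [IsProbabilityMeasure ν] {F : X → ℝ}
    (hc : Equidistributed c ν) (hF : Integrable F μ) :
    HasErgodicLimit c μ F (orbitAverage ν F) := by
  refine .of_approx hF.1 (integrable_orbitAverage hF).1 fun ε hε ↦ ?_
  obtain ⟨g, hFg, hg⟩ := (memLp_one_iff_integrable.2 hF).exists_boundedContinuous_eLpNorm_sub_le
    ENNReal.one_ne_top hε
  rw [memLp_one_iff_integrable] at hg
  refine ⟨g, orbitAverage ν g, hg.1, (integrable_orbitAverage hg).1, hFg, ?_,
    hc.hasErgodicLimit_boundedContinuous g⟩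
  rw [← eLpNorm_congr_ae (orbitAverage_sub_ae_eq hF hg)]
  exact (eLpNorm_orbitAverage_le (hF.sub hg)).trans hFg

end CompactGroupActions

section TorusLift

variable {ι : Type*}

/-- The quotient map `ℝ^ι → (ℝ/ℤ)^ι`. -/
def torusProj : (ι → ℝ) →+ UnitAddTorus ι where
  toFun x i := (x i : UnitAddCircle)
  map_zero' := rfl
  map_add' _ _ := rfl

/-- The section of `torusProj` with values in `(0, 1]^ι`. -/
def torusLift (v : UnitAddTorus ι) : ι → ℝ := fun i ↦ AddCircle.equivIoc 1 0 (v i)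

lemma torusProj_torusLift (v : UnitAddTorus ι) : torusProj (torusLift v) = v :=
  funext fun _ ↦ AddCircle.coe_equivIoc

lemma torusLift_injective : Function.Injective (torusLift (ι := ι)) :=
  Function.LeftInverse.injective torusProj_torusLift

lemma torusProj_eq_zero_iff {x : ι → ℝ} :
    torusProj x = 0 ↔ ∃ n : ι → ℤ, x = fun i ↦ (n i : ℝ) := by
  simp only [funext_iff, ← Classical.skolem (p := fun i (n : ℤ) ↦ x i = n)]
  refine forall_congr' fun i ↦ (AddCircle.coe_eq_zero_iff (1 : ℝ)).trans (exists_congr fun n ↦ ?_)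
  rw [zsmul_one, eq_comm]

lemma torusProj_units_smul (ε : ℤˣ) (x : ι → ℝ) :
    torusProj (ε • x) = ε • torusProj x :=
  map_zsmul torusProj (ε : ℤ) x

lemma measurePreserving_torusLift [Fintype ι] : MeasurePreserving (torusLift (ι := ι)) volume
    (volume.restrict (Set.univ.pi fun _ ↦ Set.Ico 0 1)) := by
  have hres : volume.restrict (Set.Ico (0 : ℝ) 1) = volume.restrict (Set.Ioc 0 (0 + 1)) := by
    rw [zero_add, Measure.restrict_congr_set Ico_ae_eq_Ioc]
  rw [volume_pi (α := fun _ ↦ ℝ), Measure.restrict_pi_pi, hres]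
  exact measurePreserving_pi _ _ fun _ ↦
    (MeasurePreserving.mk measurable_subtype_coe (map_comap_subtype_coe measurableSet_Ioc _)).comp
      (AddCircle.measurePreserving_equivIoc 1)

end TorusLift

section UnitCells

variable {M L : Matrix (Fin 2) (Fin 2) ℝ}

lemma cell_eq_image (M : Matrix (Fin 2) (Fin 2) ℝ) :
    cell M = (M *ᵥ ·) '' Set.univ.pi fun _ ↦ Set.Ico 0 1 := by
  ext x
  simp only [cell, Set.mem_ofPred_eq, Set.mem_image, Set.mem_univ_pi, eq_comm (a := x)]

lemma image_mulVec_cell (M L : Matrix (Fin 2) (Fin 2) ℝ) :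
    (M *ᵥ ·) '' cell L = cell (M * L) := by
  simp only [cell_eq_image, Set.image_image, Matrix.mulVec_mulVec]

lemma volume_cell (M : Matrix (Fin 2) (Fin 2) ℝ) :
    volume (cell M) = ENNReal.ofReal |M.det| := by
  have himage := Measure.addHaar_image_linearMap volume (Matrix.toLin' M)
    (Set.univ.pi fun _ ↦ Set.Ico 0 1)
  simp only [Matrix.toLin'_apply', Matrix.coe_mulVecLin, ← cell_eq_image] at himage
  rw [himage, ← Matrix.toLin'_apply', LinearMap.det_toLin', volume_pi_pi]
  simp

lemma exists_isCompact_cell_subset (M : Matrix (Fin 2) (Fin 2) ℝ) :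
    ∃ K, IsCompact K ∧ cell M ⊆ K := by
  refine ⟨(M *ᵥ ·) '' Set.univ.pi fun _ ↦ Set.Icc 0 1,
    (isCompact_univ_pi fun _ ↦ isCompact_Icc).image (by fun_prop), ?_⟩
  rw [cell_eq_image]
  exact Set.image_mono (Set.pi_mono fun _ _ ↦ Set.Ico_subset_Icc_self)

/-- The parametrization of the unit cell `M [0, 1)²` by the torus, up to the boundary. -/
def cellChart (M : Matrix (Fin 2) (Fin 2) ℝ) (v : UnitAddTorus (Fin 2)) : Fin 2 → ℝ :=
  M *ᵥ torusLift v

lemma measurable_cellChart (M : Matrix (Fin 2) (Fin 2) ℝ) : Measurable (cellChart M) :=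
  (show Continuous (M *ᵥ ·) by fun_prop).measurable.comp measurePreserving_torusLift.measurable

lemma mulVec_injective_of_isUnit_det (hM : IsUnit M.det) : Function.Injective (M *ᵥ ·) :=
  Matrix.mulVec_injective_iff_isUnit.2 ((Matrix.isUnit_iff_isUnit_det M).2 hM)

lemma measurableEmbedding_cellChart (hM : IsUnit M.det) : MeasurableEmbedding (cellChart M) :=
  (measurable_cellChart M).measurableEmbedding
    ((mulVec_injective_of_isUnit_det hM).comp torusLift_injective)

lemma restrict_cell (hM : IsUnit M.det) :
    volume.restrict (cell M) = ENNReal.ofReal |M.det| • volume.map (cellChart M) := by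
  have hcont : Continuous (M *ᵥ ·) := by fun_prop
  have hinj : Function.Injective (M *ᵥ ·) := mulVec_injective_of_isUnit_det hM
  have hdet : ENNReal.ofReal |M.det| * ENNReal.ofReal |M.det⁻¹| = 1 := by
    rw [← ENNReal.ofReal_mul (abs_nonneg _), ← abs_mul, mul_inv_cancel₀ hM.ne_zero, abs_one,
      ENNReal.ofReal_one]
  have hmap : volume.map (M *ᵥ ·) = ENNReal.ofReal |M.det⁻¹| • volume :=
    Real.map_matrix_volume_pi_eq_smul_volume_pi hM.ne_zero
  calc volume.restrict (cell M)
      = ENNReal.ofReal |M.det| • (volume.map (M *ᵥ ·)).restrict (cell M) := by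
        rw [hmap, Measure.restrict_smul, smul_smul, hdet, one_smul]
    _ = ENNReal.ofReal |M.det| •
          (volume.restrict (Set.univ.pi fun _ ↦ Set.Ico 0 1)).map (M *ᵥ ·) := by
        rw [(hcont.measurableEmbedding hinj).restrict_map, cell_eq_image,
          Set.preimage_image_eq _ hinj]
    _ = ENNReal.ofReal |M.det| • volume.map (cellChart M) := by
        rw [← measurePreserving_torusLift.map_eq,
          Measure.map_map hcont.measurable measurePreserving_torusLift.measurable]
        rfl

lemma average_cell {E : Type*} [NormedAddCommGroup E] [NormedSpace ℝ E] (hM : IsUnit M.det)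
    (g : (Fin 2 → ℝ) → E) :
    ⨍ x in cell M, g x = ∫ v, g (cellChart M v) := by
  rw [setAverage_eq, restrict_cell hM, integral_smul_measure,
    (measurableEmbedding_cellChart hM).integral_map, measureReal_def, volume_cell,
    inv_smul_smul₀]
  exact (ENNReal.toReal_pos (by simpa using hM.ne_zero) ENNReal.ofReal_ne_top).ne'

lemma restrict_cell_prod_cell (hM : IsUnit M.det) (hL : IsUnit L.det) :
    volume.restrict (cell M ×ˢ cell L) =
      ENNReal.ofReal |M.det * L.det| • volume.map (Prod.map (cellChart M) (cellChart L)) := by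
  rw [Measure.volume_eq_prod, ← Measure.prod_restrict, restrict_cell hM, restrict_cell hL,
    Measure.prod_smul_left, Measure.prod_smul_right,
    Measure.map_prod_map _ _ (measurable_cellChart M) (measurable_cellChart L), smul_smul,
    ← ENNReal.ofReal_mul (abs_nonneg _), ← abs_mul]
  rfl

end UnitCells

section DiagonalTorusAction

variable {ι : Type*}

lemma measurableEmbedding_units_smul (ε : ℤˣ) :
    MeasurableEmbedding (fun v : UnitAddTorus ι ↦ ε • v) :=
  measurableEmbedding_const_smul ε

variable [Fintype ι]

instance : MeasurableVAdd₂ (UnitAddTorus ι) (UnitAddTorus ι × UnitAddTorus ι) :=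
  ⟨(measurable_fst.add measurable_snd.fst).prodMk (measurable_fst.add measurable_snd.snd)⟩

instance : VAddInvariantMeasure (UnitAddTorus ι) (UnitAddTorus ι × UnitAddTorus ι) volume where
  measure_preimage_vadd v _ hs :=
    ((measurePreserving_add_left volume v).prod
      (measurePreserving_add_left volume v)).measure_preimage hs.nullMeasurableSet

instance : (volume : Measure (UnitAddTorus ι × UnitAddTorus ι)).WeaklyRegular :=
  haveI := Measure.Regular.of_sigmaCompactSpace_of_isLocallyFiniteMeasure
    (volume : Measure (UnitAddTorus ι × UnitAddTorus ι))
  inferInstance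

lemma measurePreserving_units_smul (ε : ℤˣ) :
    MeasurePreserving (fun v : UnitAddTorus ι ↦ ε • v) := by
  rcases Int.units_eq_one_or ε with rfl | rfl
  · simp only [one_smul]
    exact .id _
  · have := Measure.Regular.of_sigmaCompactSpace_of_isLocallyFiniteMeasure
      (volume : Measure (UnitAddTorus ι))
    have := Measure.IsAddHaarMeasure.isNegInvariant_of_regular
      (volume : Measure (UnitAddTorus ι))
    simp only [Units.neg_smul, one_smul]
    exact Measure.measurePreserving_neg _

lemma integral_units_smul_sub_vadd {E : Type*} [NormedAddCommGroup E] [NormedSpace ℝ E]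
    {F : UnitAddTorus ι × UnitAddTorus ι → E} (ε : ℤˣ) (c : UnitAddTorus ι)
    (p : UnitAddTorus ι × UnitAddTorus ι) :
    ∫ v : UnitAddTorus ι, F ((ε • (v - c)) +ᵥ p) =
      orbitAverage (volume : Measure (UnitAddTorus ι)) F p := by
  rw [integral_sub_right_eq_self (fun v ↦ F ((ε • v) +ᵥ p)) c]
  exact (measurePreserving_units_smul ε).integral_comp (measurableEmbedding_units_smul ε)
    fun v ↦ F (v +ᵥ p)

end DiagonalTorusAction

section LayerOrbit

/-- `iv` as an additive homomorphism. -/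
def ivHom : (Fin 2 → ℤ) →+ (Fin 2 → ℝ) := (Int.castAddHom ℝ).compLeft (Fin 2)

lemma iv_eq_zero_iff {n : Fin 2 → ℤ} : iv n = 0 ↔ n = 0 := by
  simp only [funext_iff, iv, Pi.zero_apply, Int.cast_eq_zero]

variable {A A' : Matrix (Fin 2) (Fin 2) ℝ}

/-- The orbit `n ↦ A'⁻¹ A n mod ℤ²` of the layer lattice `A ℤ²` in the unit cell of `A' ℤ²`. -/
def layerOrbit (A A' : Matrix (Fin 2) (Fin 2) ℝ) : (Fin 2 → ℤ) →+ UnitAddTorus (Fin 2) :=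
  torusProj.comp ((A'⁻¹ * A).mulVecLin.toAddMonoidHom.comp ivHom)

lemma layerOrbit_apply (n : Fin 2 → ℤ) :
    layerOrbit A A' n = torusProj ((A'⁻¹ * A) *ᵥ iv n) := rfl

lemma torusChar_torusProj (k : Fin 2 → ℤ) (x : Fin 2 → ℝ) :
    torusChar k (torusProj x) = Complex.exp ((iv k ⬝ᵥ x : ℝ) * (2 * π * Complex.I)) := by
  have hcoord (i : Fin 2) : fourier (k i) ((x i : ℝ) : UnitAddCircle) =
      Complex.exp (k i * x i * (2 * π * Complex.I)) := by
    rw [fourier_coe_apply, Complex.ofReal_one, div_one]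
    ring_nf
  change ∏ i, fourier (k i) ((x i : ℝ) : UnitAddCircle) = _
  simp only [hcoord, ← Complex.exp_sum, ← Finset.sum_mul, dotProduct, iv]
  push_cast
  rfl

lemma torusChar_torusProj_eq_one_iff {k : Fin 2 → ℤ} {x : Fin 2 → ℝ} :
    torusChar k (torusProj x) = 1 ↔ ∃ m : ℤ, iv k ⬝ᵥ x = m := by
  rw [torusChar_torusProj, Complex.exp_eq_one_iff]
  refine exists_congr fun m ↦ ?_
  rw [mul_left_inj' Complex.two_pi_I_ne_zero]
  norm_cast

lemma Incommensurate.symm {B B' : Matrix (Fin 2) (Fin 2) ℝ} (h : Incommensurate B B') :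
    Incommensurate B' B :=
  fun G' hG' G hG hsum ↦ (h G hG G' hG' ((add_comm G G').trans hsum)).symm

lemma isUnit_det_recip (hA : IsUnit A.det) : IsUnit (recip A).det := by
  rw [recip, Matrix.det_smul, Matrix.det_transpose]
  exact (IsUnit.mk0 _ (pow_ne_zero _ Real.two_pi_pos.ne')).mul
    (Matrix.isUnit_nonsing_inv_det _ hA)

lemma transpose_mul_recip (hA : IsUnit A.det) : Aᵀ * recip A = (2 * π) • 1 := by
  rw [recip, Matrix.mul_smul, ← Matrix.transpose_mul, Matrix.nonsing_inv_mul _ hA,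
    Matrix.transpose_one]

lemma recip_mulVec_transpose_mulVec (hA : IsUnit A.det) (v : Fin 2 → ℝ) :
    recip A *ᵥ (Aᵀ *ᵥ v) = (2 * π) • v := by
  rw [recip, Matrix.mulVec_mulVec, Matrix.smul_mul, ← Matrix.transpose_mul,
    Matrix.mul_nonsing_inv _ hA, Matrix.transpose_one, Matrix.smul_mulVec, Matrix.one_mulVec]

-- `torusChar k` is trivial on the orbit only if `Aᵀ A'⁻ᵀ k` is integral, that is, only if the
-- reciprocal lattice vector `2π A'⁻ᵀ k` also belongs to the reciprocal lattice of `A ℤ²`.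
lemma Incommensurate.torusChar_layerOrbit_ne_one (h : Incommensurate (recip A) (recip A'))
    (hA : IsUnit A.det) (hA' : IsUnit A'.det) {k : Fin 2 → ℤ} (hk : k ≠ 0) :
    (torusChar k).compAddMonoidHom (layerOrbit A A') ≠ 1 := by
  intro htriv
  have hint (i : Fin 2) : ∃ m : ℤ, (Aᵀ *ᵥ ((A'⁻¹)ᵀ *ᵥ iv k)) i = m := by
    have hi : torusChar k (layerOrbit A A' (Pi.single i 1)) = 1 :=
      DFunLike.congr_fun htriv (Pi.single i 1)
    have hsingle : iv (Pi.single i 1) = Pi.single i 1 := by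
      ext l
      simp [iv, Pi.single_apply]
    rwa [layerOrbit_apply, torusChar_torusProj_eq_one_iff, hsingle, Matrix.dotProduct_mulVec,
      dotProduct_single, mul_one, ← Matrix.mulVec_transpose, Matrix.transpose_mul,
      ← Matrix.mulVec_mulVec] at hi
  choose m hm using hint
  have hsum : recip A *ᵥ iv (-m) + recip A' *ᵥ iv k = 0 := by
    have hneg : iv (-m) = -iv m := map_neg ivHom m
    have hAm : recip A *ᵥ iv m = recip A' *ᵥ iv k := by
      rw [show iv m = _ from (funext hm).symm, recip_mulVec_transpose_mulVec hA, recip,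
        Matrix.smul_mulVec]
    rw [hneg, Matrix.mulVec_neg, hAm, neg_add_cancel]
  have hzero : recip A' *ᵥ iv k = 0 := (h _ ⟨-m, rfl⟩ _ ⟨k, rfl⟩ hsum).2
  exact hk (iv_eq_zero_iff.1
    (mulVec_injective_of_isUnit_det (isUnit_det_recip hA') (hzero.trans (mulVec_zero _).symm)))

lemma Incommensurate.equidistributed_layerOrbit (h : Incommensurate (recip A) (recip A'))
    (hA : IsUnit A.det) (hA' : IsUnit A'.det) : Equidistributed (layerOrbit A A') volume :=
  equidistributed_of_forall_torusChar_ne_one fun _ hk ↦ h.torusChar_layerOrbit_ne_one hA hA' hk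

end LayerOrbit

section MoireGeometry

/-- `M` is a basis matrix of the moiré lattice of the layers `A ℤ²` and `A' ℤ²`: up to the sign `ε`,
the inverse of `M` is `A'⁻¹ - A⁻¹`. -/
structure IsMoireBasis (M A A' : Matrix (Fin 2) (Fin 2) ℝ) (ε : ℤˣ) : Prop where
  isUnit_det_left : IsUnit A.det
  isUnit_det_right : IsUnit A'.det
  sub_mul_eq : (A'⁻¹ - A⁻¹) * M = ε • 1

/-- The coordinates of `ω : ℝ² × ℝ²` modulo the moiré lattice and the lattice `A' ℤ²`. -/
def moireProj (A A' : Matrix (Fin 2) (Fin 2) ℝ) : (Fin 2 → ℝ) × (Fin 2 → ℝ) →+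
    UnitAddTorus (Fin 2) × UnitAddTorus (Fin 2) :=
  (torusProj.comp (A'⁻¹ - A⁻¹).mulVecLin.toAddMonoidHom).prodMap
    (torusProj.comp A'⁻¹.mulVecLin.toAddMonoidHom)

/-- The disregistry matrix `D = I - A' A⁻¹` of the layer `A ℤ²` with respect to `A' ℤ²`. -/
def disregistry (A A' : Matrix (Fin 2) (Fin 2) ℝ) : Matrix (Fin 2) (Fin 2) ℝ := 1 - A' * A⁻¹

variable {M A A' : Matrix (Fin 2) (Fin 2) ℝ} {ε : ℤˣ}

lemma moireProj_apply (ω : (Fin 2 → ℝ) × (Fin 2 → ℝ)) : moireProj A A' ω =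
    (torusProj ((A'⁻¹ - A⁻¹) *ᵥ ω.1), torusProj (A'⁻¹ *ᵥ ω.2)) := rfl

/-- The parametrization of the product of unit cells of `M ℤ²` and `A' ℤ²` by the product of tori
that inverts `moireProj A A'`. -/
def moireChart (M A' : Matrix (Fin 2) (Fin 2) ℝ) (ε : ℤˣ)
    (p : UnitAddTorus (Fin 2) × UnitAddTorus (Fin 2)) : (Fin 2 → ℝ) × (Fin 2 → ℝ) :=
  (cellChart M (ε • p.1), cellChart A' p.2)

namespace IsMoireBasis

lemma mul_sub_eq (hM : IsMoireBasis M A A' ε) : M * (A'⁻¹ - A⁻¹) = ε • 1 := by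
  have hinv : (A'⁻¹ - A⁻¹) * (ε • M) = 1 := by
    rw [Matrix.mul_smul, hM.sub_mul_eq, smul_smul, Int.units_mul_self, one_smul]
  rw [← mul_eq_one_comm.1 hinv, Matrix.smul_mul, smul_smul, Int.units_mul_self, one_smul]

lemma isUnit_det (hM : IsMoireBasis M A A' ε) : IsUnit M.det := by
  refine Matrix.isUnit_det_of_right_inverse (B := ε • (A'⁻¹ - A⁻¹)) ?_
  rw [Matrix.mul_smul, hM.mul_sub_eq, smul_smul, Int.units_mul_self, one_smul]

lemma moireProj_moireChart (hM : IsMoireBasis M A A' ε)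
    (p : UnitAddTorus (Fin 2) × UnitAddTorus (Fin 2)) :
    moireProj A A' (moireChart M A' ε p) = p := by
  refine Prod.ext ?_ ?_
  · simp only [moireProj_apply, moireChart, cellChart]
    rw [Matrix.mulVec_mulVec, hM.sub_mul_eq, Matrix.smul_mulVec, Matrix.one_mulVec,
      torusProj_units_smul, torusProj_torusLift, smul_smul, Int.units_mul_self, one_smul]
  · simp only [moireProj_apply, moireChart, cellChart]
    rw [Matrix.mulVec_mulVec, Matrix.nonsing_inv_mul _ hM.isUnit_det_right, Matrix.one_mulVec,
      torusProj_torusLift]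

lemma measurableEmbedding_moireChart (hM : IsMoireBasis M A A' ε) :
    MeasurableEmbedding (moireChart M A' ε) :=
  ((measurableEmbedding_cellChart hM.isUnit_det).comp (measurableEmbedding_units_smul ε)).prodMap
    (measurableEmbedding_cellChart hM.isUnit_det_right)

lemma restrict_cell_prod_eq_map_moireChart (hM : IsMoireBasis M A A' ε) :
    volume.restrict (cell M ×ˢ cell A') =
      ENNReal.ofReal |M.det * A'.det| • volume.map (moireChart M A' ε) := by
  have hsmul : MeasurePreserving (Prod.map (ε • ·) id :
      UnitAddTorus (Fin 2) × UnitAddTorus (Fin 2) → _) :=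
    (measurePreserving_units_smul ε).prod (.id volume)
  have hchart : moireChart M A' ε = Prod.map (cellChart M) (cellChart A') ∘ Prod.map (ε • ·) id :=
    rfl
  rw [hchart, ← Measure.map_map
    ((measurable_cellChart M).prodMap (measurable_cellChart A')) hsmul.measurable, hsmul.map_eq,
    restrict_cell_prod_cell hM.isUnit_det hM.isUnit_det_right]

lemma inv_mul_disregistry (hM : IsMoireBasis M A A' ε) :
    A'⁻¹ * disregistry A A' = A'⁻¹ - A⁻¹ := by
  rw [disregistry, Matrix.mul_sub, Matrix.mul_one, ← Matrix.mul_assoc,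
    Matrix.nonsing_inv_mul _ hM.isUnit_det_right, Matrix.one_mul]

lemma isUnit_det_disregistry (hM : IsMoireBasis M A A' ε) : IsUnit (disregistry A A').det := by
  have hunit : IsUnit (A'⁻¹ * disregistry A A' * M).det := by
    rw [hM.inv_mul_disregistry, hM.sub_mul_eq, ← Matrix.isUnit_iff_isUnit_det]
    exact ⟨ε • 1, by simp [Units.smul_def]⟩
  rw [Matrix.det_mul, Matrix.det_mul] at hunit
  exact isUnit_of_mul_isUnit_right (isUnit_of_mul_isUnit_left hunit)

lemma moireProj_disregistry (hM : IsMoireBasis M A A' ε) (z : Fin 2 → ℝ) :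
    moireProj A A' (z, disregistry A A' *ᵥ z) =
      (torusProj ((A'⁻¹ - A⁻¹) *ᵥ z), torusProj ((A'⁻¹ - A⁻¹) *ᵥ z)) := by
  rw [moireProj_apply, Matrix.mulVec_mulVec, hM.inv_mul_disregistry]

lemma moireProj_layer (hM : IsMoireBasis M A A' ε) (n : Fin 2 → ℤ) :
    moireProj A A' (A *ᵥ iv n, A *ᵥ iv n) = (layerOrbit A A' n, layerOrbit A A' n) := by
  have hn : torusProj (iv n) = 0 := torusProj_eq_zero_iff.2 ⟨n, rfl⟩
  simp only [moireProj_apply, layerOrbit_apply, Matrix.mulVec_mulVec]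
  rw [Matrix.sub_mul, Matrix.nonsing_inv_mul _ hM.isUnit_det_left, Matrix.sub_mulVec,
    Matrix.one_mulVec, map_sub, hn, sub_zero]

variable {E : Type*} {h : (Fin 2 → ℝ) → (Fin 2 → ℝ) → E}

lemma eq_of_moireProj_eq (hM : IsMoireBasis M A A' ε)
    (hper : ∀ x y, ∀ rM ∈ lat M, ∀ r ∈ lat A', h (x + rM) (y + r) = h x y)
    {ω ω' : (Fin 2 → ℝ) × (Fin 2 → ℝ)} (heq : moireProj A A' ω = moireProj A A' ω') :
    h ω.1 ω.2 = h ω'.1 ω'.2 := by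
  have hsub := Prod.ext_iff.1 ((map_sub _ _ _).trans (sub_eq_zero.2 heq))
  simp only [moireProj_apply] at hsub
  obtain ⟨n, hn⟩ := torusProj_eq_zero_iff.1 hsub.1
  obtain ⟨m, hm⟩ := torusProj_eq_zero_iff.1 hsub.2
  have h1 : (ω - ω').1 ∈ lat M := by
    refine ⟨ε • n, ?_⟩
    have hiv : iv (ε • n) = ε • iv n := map_zsmul ivHom _ n
    rw [hiv, show iv n = _ from hn.symm, Matrix.mulVec_smul, Matrix.mulVec_mulVec, hM.mul_sub_eq,
      Matrix.smul_mulVec, smul_smul, Int.units_mul_self, one_smul, Matrix.one_mulVec]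
  have h2 : (ω - ω').2 ∈ lat A' := by
    refine ⟨m, ?_⟩
    rw [show iv m = _ from hm.symm, Matrix.mulVec_mulVec,
      Matrix.mul_nonsing_inv _ hM.isUnit_det_right, Matrix.one_mulVec]
  simpa only [Prod.fst_sub, Prod.snd_sub, add_sub_cancel] using hper ω'.1 ω'.2 _ h1 _ h2

end IsMoireBasis

end MoireGeometry

section MoireErgodic

variable {M A A' : Matrix (Fin 2) (Fin 2) ℝ} {ε : ℤˣ} {E : Type*}
  {h : (Fin 2 → ℝ) → (Fin 2 → ℝ) → E}

/-- The function on the product of tori through which an `M ℤ² × A' ℤ²`-periodic function `h`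
factors. -/
def moireFun (M A' : Matrix (Fin 2) (Fin 2) ℝ) (ε : ℤˣ) (h : (Fin 2 → ℝ) → (Fin 2 → ℝ) → E) :
    UnitAddTorus (Fin 2) × UnitAddTorus (Fin 2) → E :=
  Function.uncurry h ∘ moireChart M A' ε

namespace IsMoireBasis

lemma apply_eq_moireFun (hM : IsMoireBasis M A A' ε)
    (hper : ∀ x y, ∀ rM ∈ lat M, ∀ r ∈ lat A', h (x + rM) (y + r) = h x y)
    (ω : (Fin 2 → ℝ) × (Fin 2 → ℝ)) : h ω.1 ω.2 = moireFun M A' ε h (moireProj A A' ω) :=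
  hM.eq_of_moireProj_eq hper (hM.moireProj_moireChart _).symm

lemma apply_add_disregistry (hM : IsMoireBasis M A A' ε)
    (hper : ∀ x y, ∀ rM ∈ lat M, ∀ r ∈ lat A', h (x + rM) (y + r) = h x y)
    (ω : (Fin 2 → ℝ) × (Fin 2 → ℝ)) (z : Fin 2 → ℝ) :
    h (z + ω.1) (disregistry A A' *ᵥ z + ω.2) =
      moireFun M A' ε h (torusProj ((A'⁻¹ - A⁻¹) *ᵥ z) +ᵥ moireProj A A' ω) := by
  refine (hM.apply_eq_moireFun hper ((z, disregistry A A' *ᵥ z) + ω)).trans ?_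
  rw [map_add, hM.moireProj_disregistry]
  rfl

lemma mean_box_eq_orbitMean {h : (Fin 2 → ℝ) → (Fin 2 → ℝ) → ℝ} (hM : IsMoireBasis M A A' ε)
    (hper : ∀ x y, ∀ rM ∈ lat M, ∀ r ∈ lat A', h (x + rM) (y + r) = h x y)
    (ω : (Fin 2 → ℝ) × (Fin 2 → ℝ)) (N : ℕ) :
    ((2 * N + 1 : ℝ) ^ 2)⁻¹ * ∑ n ∈ box N, h (ω.1 + A *ᵥ iv n) (ω.2 + A *ᵥ iv n) =
      orbitMean (layerOrbit A A') (moireFun M A' ε h) N (moireProj A A' ω) := by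
  have hbox : box N = intCube 0 N := by
    ext n
    simp [box, intCube]
  have hcard : ((intCube (0 : Fin 2 → ℤ) N).card : ℝ) = (2 * N + 1) ^ 2 := by
    simp [card_intCube]
  rw [orbitMean, cubeMean, hcard, smul_eq_mul, hbox]
  congr 1
  refine Finset.sum_congr rfl fun n _ ↦ ?_
  refine (hM.apply_eq_moireFun hper (ω + (A *ᵥ iv n, A *ᵥ iv n))).trans ?_
  rw [map_add, hM.moireProj_layer, add_comm]
  rfl

variable [NormedAddCommGroup E]

lemma integrable_moireFun (hM : IsMoireBasis M A A' ε)
    (hloc : LocallyIntegrable (Function.uncurry h)) : Integrable (moireFun M A' ε h) := by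
  obtain ⟨K, hK, hMK⟩ := exists_isCompact_cell_subset M
  obtain ⟨K', hK', hAK'⟩ := exists_isCompact_cell_subset A'
  have hdet : M.det * A'.det ≠ 0 := (hM.isUnit_det.mul hM.isUnit_det_right).ne_zero
  have hint : IntegrableOn (Function.uncurry h) (cell M ×ˢ cell A') :=
    (hloc.integrableOn_isCompact (hK.prod hK')).mono_set (Set.prod_mono hMK hAK')
  rwa [IntegrableOn, hM.restrict_cell_prod_eq_map_moireChart,
    integrable_smul_measure (by simpa using hdet) ENNReal.ofReal_ne_top,
    hM.measurableEmbedding_moireChart.integrable_map_iff] at hint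

variable [NormedSpace ℝ E]

lemma average_layer_eq_orbitAverage (hM : IsMoireBasis M A A' ε)
    (hper : ∀ x y, ∀ rM ∈ lat M, ∀ r ∈ lat A', h (x + rM) (y + r) = h x y)
    (ω : (Fin 2 → ℝ) × (Fin 2 → ℝ)) :
    ⨍ ξ in (A⁻¹ *ᵥ ·) '' cell M, h (A *ᵥ ξ + ω.1) ((A - A') *ᵥ ξ + ω.2) =
      orbitAverage (volume : Measure (UnitAddTorus (Fin 2))) (moireFun M A' ε h)
        (moireProj A A' ω) := by
  have hdet : IsUnit (A⁻¹ * M).det := by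
    rw [Matrix.det_mul]
    exact (Matrix.isUnit_nonsing_inv_det _ hM.isUnit_det_left).mul hM.isUnit_det
  have hDA : A - A' = disregistry A A' * A := by
    rw [disregistry, Matrix.sub_mul, Matrix.one_mul, Matrix.mul_assoc,
      Matrix.nonsing_inv_mul _ hM.isUnit_det_left, Matrix.mul_one]
  rw [image_mulVec_cell, average_cell hdet, ← integral_units_smul_sub_vadd ε 0]
  refine integral_congr_ae (.of_forall fun v ↦ ?_)
  simp only [hDA, ← Matrix.mulVec_mulVec, hM.apply_add_disregistry hper, cellChart]
  rw [Matrix.mulVec_mulVec _ A A⁻¹, Matrix.mul_nonsing_inv _ hM.isUnit_det_left, Matrix.one_mulVec,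
    Matrix.mulVec_mulVec, hM.sub_mul_eq, Matrix.smul_mulVec, Matrix.one_mulVec,
    torusProj_units_smul, torusProj_torusLift, sub_zero]

lemma average_moire_eq_orbitAverage (hM : IsMoireBasis M A A' ε)
    (hper : ∀ x y, ∀ rM ∈ lat M, ∀ r ∈ lat A', h (x + rM) (y + r) = h x y)
    (ω : (Fin 2 → ℝ) × (Fin 2 → ℝ)) :
    ⨍ x in cell M, h x (disregistry A A' *ᵥ (x - ω.1) + ω.2) =
      orbitAverage (volume : Measure (UnitAddTorus (Fin 2))) (moireFun M A' ε h)
        (moireProj A A' ω) := by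
  rw [average_cell hM.isUnit_det,
    ← integral_units_smul_sub_vadd ε (ε • torusProj ((A'⁻¹ - A⁻¹) *ᵥ ω.1))]
  refine integral_congr_ae (.of_forall fun v ↦ ?_)
  beta_reduce
  have happly := hM.apply_add_disregistry hper ω (cellChart M v - ω.1)
  simp only [sub_add_cancel] at happly
  rw [happly, Matrix.mulVec_sub, cellChart, Matrix.mulVec_mulVec, hM.sub_mul_eq, map_sub,
    Matrix.smul_mulVec, Matrix.one_mulVec, torusProj_units_smul, torusProj_torusLift, smul_sub,
    smul_smul, Int.units_mul_self, one_smul]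

lemma average_right_eq_orbitAverage (hM : IsMoireBasis M A A' ε)
    (hper : ∀ x y, ∀ rM ∈ lat M, ∀ r ∈ lat A', h (x + rM) (y + r) = h x y)
    (ω : (Fin 2 → ℝ) × (Fin 2 → ℝ)) :
    ⨍ y in cell A', h ((disregistry A A')⁻¹ *ᵥ (y - ω.2) + ω.1) y =
      orbitAverage (volume : Measure (UnitAddTorus (Fin 2))) (moireFun M A' ε h)
        (moireProj A A' ω) := by
  have hW : (A'⁻¹ - A⁻¹) * (disregistry A A')⁻¹ = A'⁻¹ := by
    rw [← hM.inv_mul_disregistry, Matrix.mul_assoc,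
      Matrix.mul_nonsing_inv _ hM.isUnit_det_disregistry, Matrix.mul_one]
  rw [average_cell hM.isUnit_det_right,
    ← integral_units_smul_sub_vadd 1 (torusProj (A'⁻¹ *ᵥ ω.2))]
  refine integral_congr_ae (.of_forall fun v ↦ ?_)
  beta_reduce
  have happly := hM.apply_add_disregistry hper ω
    ((disregistry A A')⁻¹ *ᵥ (cellChart A' v - ω.2))
  rw [Matrix.mulVec_mulVec, Matrix.mul_nonsing_inv _ hM.isUnit_det_disregistry,
    Matrix.one_mulVec, sub_add_cancel, Matrix.mulVec_mulVec, hW] at happly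
  rw [happly, cellChart, Matrix.mulVec_sub, Matrix.mulVec_mulVec,
    Matrix.nonsing_inv_mul _ hM.isUnit_det_right, Matrix.one_mulVec, map_sub, torusProj_torusLift,
    one_smul]

end IsMoireBasis

end MoireErgodic

section DoubleErgodicTheorem

variable {A A1 A2 M A' : Matrix (Fin 2) (Fin 2) ℝ} {ε : ℤˣ} {h : (Fin 2 → ℝ) → (Fin 2 → ℝ) → ℝ}

namespace IsMoireBasis

lemma hasErgodicLimit_moireFun (hM : IsMoireBasis M A A' ε)
    (hinc : Incommensurate (recip A) (recip A')) (hloc : LocallyIntegrable (Function.uncurry h)) :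
    HasErgodicLimit (layerOrbit A A') volume (moireFun M A' ε h)
      (orbitAverage (volume : Measure (UnitAddTorus (Fin 2))) (moireFun M A' ε h)) :=
  (hinc.equidistributed_layerOrbit hM.isUnit_det_left hM.isUnit_det_right).hasErgodicLimit
    (hM.integrable_moireFun hloc)

lemma ae_tendsto_mean_box (hM : IsMoireBasis M A A' ε)
    (hinc : Incommensurate (recip A) (recip A')) (hloc : LocallyIntegrable (Function.uncurry h))
    (hper : ∀ x y, ∀ rM ∈ lat M, ∀ r ∈ lat A', h (x + rM) (y + r) = h x y) :
    ∀ᵐ ω ∂volume.restrict (cell M ×ˢ cell A'), Tendsto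
      (fun N : ℕ ↦ ((2 * N + 1 : ℝ) ^ 2)⁻¹ *
        ∑ n ∈ box N, h (ω.1 + A *ᵥ iv n) (ω.2 + A *ᵥ iv n)) atTop
      (𝓝 (⨍ ξ in (A⁻¹ *ᵥ ·) '' cell M, h (A *ᵥ ξ + ω.1) ((A - A') *ᵥ ξ + ω.2))) := by
  rw [hM.restrict_cell_prod_eq_map_moireChart]
  refine Measure.ae_smul_measure (hM.measurableEmbedding_moireChart.ae_map_iff.2 ?_) _
  simpa only [hM.mean_box_eq_orbitMean hper, hM.average_layer_eq_orbitAverage hper,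
    hM.moireProj_moireChart] using (hM.hasErgodicLimit_moireFun hinc hloc).ae_tendsto

lemma tendsto_integral_abs_mean_box_sub (hM : IsMoireBasis M A A' ε)
    (hinc : Incommensurate (recip A) (recip A')) (hloc : LocallyIntegrable (Function.uncurry h))
    (hper : ∀ x y, ∀ rM ∈ lat M, ∀ r ∈ lat A', h (x + rM) (y + r) = h x y) :
    Tendsto (fun N : ℕ ↦ ∫ ω in cell M ×ˢ cell A', |((2 * N + 1 : ℝ) ^ 2)⁻¹ *
        (∑ n ∈ box N, h (ω.1 + A *ᵥ iv n) (ω.2 + A *ᵥ iv n)) -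
          ⨍ ξ in (A⁻¹ *ᵥ ·) '' cell M, h (A *ᵥ ξ + ω.1) ((A - A') *ᵥ ξ + ω.2)|)
      atTop (𝓝 0) := by
  have hint := hM.integrable_moireFun hloc
  have hlim := ((hM.hasErgodicLimit_moireFun hinc hloc).tendsto_integral_norm_sub hint.1
    (integrable_orbitAverage hint).1).const_mul |M.det * A'.det|
  simpa only [hM.mean_box_eq_orbitMean hper, hM.average_layer_eq_orbitAverage hper,
    hM.restrict_cell_prod_eq_map_moireChart, integral_smul_measure,
    hM.measurableEmbedding_moireChart.integral_map, hM.moireProj_moireChart, smul_eq_mul,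
    ENNReal.toReal_ofReal (abs_nonneg _), Real.norm_eq_abs, mul_zero] using hlim

end IsMoireBasis

lemma isMoireBasis_recip_sub_recip (hA1 : IsUnit A1.det) (hA2 : IsUnit A2.det)
    (hB : IsUnit (recip A1 - recip A2).det) :
    IsMoireBasis (recip (recip A1 - recip A2)) A2 A1 1 where
  isUnit_det_left := hA2
  isUnit_det_right := hA1
  sub_mul_eq := by
    have htranspose : (recip A1 - recip A2)ᵀ = (2 * π) • (A1⁻¹ - A2⁻¹) := by
      simp only [recip, Matrix.transpose_sub, Matrix.transpose_smul, Matrix.transpose_transpose,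
        smul_sub]
    have hmul := transpose_mul_recip hB
    rw [htranspose, Matrix.smul_mul] at hmul
    rw [one_smul]
    exact smul_right_injective _ Real.two_pi_pos.ne' hmul

lemma IsMoireBasis.symm (hM : IsMoireBasis M A A' ε) : IsMoireBasis M A' A (-ε) where
  isUnit_det_left := hM.isUnit_det_right
  isUnit_det_right := hM.isUnit_det_left
  sub_mul_eq := by
    rw [← neg_sub, Matrix.neg_mul, hM.sub_mul_eq, Units.neg_smul]

lemma exists_isMoireBasis_and_incommensurate (hA1 : IsUnit A1.det) (hA2 : IsUnit A2.det)
    (hB : IsUnit (recip A1 - recip A2).det) (hinc : Incommensurate (recip A1) (recip A2))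
    (j : Fin 2) : ∃ ε : ℤˣ,
      IsMoireBasis (recip (recip A1 - recip A2)) (![A1, A2] j) (![A1, A2] (1 - j)) ε ∧
        Incommensurate (recip (![A1, A2] j)) (recip (![A1, A2] (1 - j))) := by
  have hM := isMoireBasis_recip_sub_recip hA1 hA2 hB
  match j with
  | 0 => exact ⟨-1, hM.symm, hinc⟩
  | 1 => exact ⟨1, hM, hinc.symm⟩

theorem double_ergodic_theorem_general (A1 A2 B1 B2 BM AM : Matrix (Fin 2) (Fin 2) ℝ)
    (hA1 : IsUnit A1.det) (hA2 : IsUnit A2.det) (hB1 : B1 = recip A1) (hB2 : B2 = recip A2)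
    (hBM : BM = B1 - B2) (hBMinv : IsUnit BM.det) (hAM : AM = recip BM)
    (hinc : Incommensurate B1 B2) (j : Fin 2) (Aj Aoth Dj : Matrix (Fin 2) (Fin 2) ℝ)
    (hAj : Aj = ![A1, A2] j) (hAoth : Aoth = ![A1, A2] (1 - j)) (hDj : Dj = 1 - Aoth * Aj⁻¹)
    (h : (Fin 2 → ℝ) → (Fin 2 → ℝ) → ℝ)
    (hloc : LocallyIntegrable (fun p : (Fin 2 → ℝ) × (Fin 2 → ℝ) ↦ h p.1 p.2) volume)
    (hper : ∀ x y : Fin 2 → ℝ, ∀ rM ∈ lat AM, ∀ r ∈ lat Aoth, h (x + rM) (y + r) = h x y) :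
    (∀ᵐ ω ∂volume.restrict (cell AM ×ˢ cell Aoth), Tendsto
      (fun N : ℕ ↦ ((2 * N + 1 : ℝ) ^ 2)⁻¹ *
        ∑ n ∈ box N, h (ω.1 + Aj *ᵥ iv n) (ω.2 + Aj *ᵥ iv n)) atTop
      (𝓝 (⨍ ξ in (Aj⁻¹ *ᵥ ·) '' cell AM, h (Aj *ᵥ ξ + ω.1) ((Aj - Aoth) *ᵥ ξ + ω.2)))) ∧
    Tendsto (fun N : ℕ ↦ ∫ ω in cell AM ×ˢ cell Aoth, |((2 * N + 1 : ℝ) ^ 2)⁻¹ *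
        (∑ n ∈ box N, h (ω.1 + Aj *ᵥ iv n) (ω.2 + Aj *ᵥ iv n)) -
          ⨍ ξ in (Aj⁻¹ *ᵥ ·) '' cell AM, h (Aj *ᵥ ξ + ω.1) ((Aj - Aoth) *ᵥ ξ + ω.2)|)
      atTop (𝓝 0) ∧
    ∀ ωM ωo : Fin 2 → ℝ,
      (⨍ ξ in (Aj⁻¹ *ᵥ ·) '' cell AM, h (Aj *ᵥ ξ + ωM) ((Aj - Aoth) *ᵥ ξ + ωo)) =
        (⨍ x in cell AM, h x (Dj *ᵥ (x - ωM) + ωo)) ∧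
      (⨍ ξ in (Aj⁻¹ *ᵥ ·) '' cell AM, h (Aj *ᵥ ξ + ωM) ((Aj - Aoth) *ᵥ ξ + ωo)) =
        (⨍ y in cell Aoth, h (Dj⁻¹ *ᵥ (y - ωo) + ωM) y) := by
  subst hB1 hB2 hBM hAM
  obtain ⟨ε, hM, hincj⟩ := exists_isMoireBasis_and_incommensurate hA1 hA2 hBMinv hinc j
  rw [← hAj, ← hAoth] at hM hincj
  have hD : Dj = disregistry Aj Aoth := hDj
  rw [hD]
  refine ⟨hM.ae_tendsto_mean_box hincj hloc hper,
    hM.tendsto_integral_abs_mean_box_sub hincj hloc hper, fun ωM ωo ↦ ?_⟩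
  have hlayer := hM.average_layer_eq_orbitAverage hper (ωM, ωo)
  exact ⟨hlayer.trans (hM.average_moire_eq_orbitAverage hper (ωM, ωo)).symm,
    hlayer.trans (hM.average_right_eq_orbitAverage hper (ωM, ωo)).symm⟩

lemma det_Rot (φ : ℝ) : (Rot φ).det = 1 := by
  rw [Rot, Matrix.det_fin_two_of]
  linear_combination Real.cos_sq_add_sin_sq φ

lemma isUnit_det_smul_Rot_mul {c : ℝ} (hc : c ≠ 0) (φ : ℝ) (hA : IsUnit A.det) :
    IsUnit (c • (Rot φ * A)).det := by
  rw [Matrix.det_smul, Matrix.det_mul, det_Rot, one_mul]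
  exact (IsUnit.mk0 _ (pow_ne_zero _ hc)).mul hA

end DoubleErgodicTheorem

/-- Proposition: pointwise and mean ergodic theorem in two variables. -/
theorem double_ergodic_theorem (θ q : ℝ) (hq : 0 < q)
    (A A1 A2 B1 B2 BM AM : Matrix (Fin 2) (Fin 2) ℝ)
    (hA : IsUnit A.det)
    (hA1 : A1 = (Real.sqrt q)⁻¹ • (Rot (-(θ / 2)) * A))
    (hA2 : A2 = Real.sqrt q • (Rot (θ / 2) * A))
    (hB1 : B1 = recip A1) (hB2 : B2 = recip A2)
    (hBM : BM = B1 - B2) (hBMinv : IsUnit BM.det)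
    (hAM : AM = recip BM)
    (hinc : Incommensurate B1 B2) (hincstar : Incommensurate A1 A2)
    (j : Fin 2) (Aj Aoth Dj : Matrix (Fin 2) (Fin 2) ℝ)
    (hAj : Aj = ![A1, A2] j) (hAoth : Aoth = ![A1, A2] (1 - j))
    (hDj : Dj = 1 - Aoth * Aj⁻¹) (hDjinv : IsUnit Dj.det)
    (h : (Fin 2 → ℝ) → (Fin 2 → ℝ) → ℝ)
    (hloc : LocallyIntegrable (fun p : (Fin 2 → ℝ) × (Fin 2 → ℝ) => h p.1 p.2) volume)
    (hper : ∀ (x y : Fin 2 → ℝ), ∀ rM ∈ lat AM, ∀ r ∈ lat Aoth,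
      h (x + rM) (y + r) = h x y) :
    -- almost sure convergence on Γ_𝓜 × Γ_{3−j}
    (∀ᵐ ω ∂(volume.restrict ((cell AM) ×ˢ (cell Aoth))),
      Tendsto
        (fun N : ℕ => ((2 * N + 1 : ℝ) ^ 2)⁻¹ *
          ∑ n ∈ box N, h (ω.1 + Aj.mulVec (iv n)) (ω.2 + Aj.mulVec (iv n)))
        atTop
        (𝓝 (⨍ ξ in (fun v => Aj⁻¹.mulVec v) '' cell AM,
          h (Aj.mulVec ξ + ω.1) ((Aj - Aoth).mulVec ξ + ω.2)))) ∧
    -- L¹(Γ_𝓜 × Γ_{3−j}) convergence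
    Tendsto
      (fun N : ℕ => ∫ ω in (cell AM) ×ˢ (cell Aoth),
        |((2 * N + 1 : ℝ) ^ 2)⁻¹ *
            (∑ n ∈ box N, h (ω.1 + Aj.mulVec (iv n)) (ω.2 + Aj.mulVec (iv n))) -
          ⨍ ξ in (fun v => Aj⁻¹.mulVec v) '' cell AM,
            h (Aj.mulVec ξ + ω.1) ((Aj - Aoth).mulVec ξ + ω.2)|)
      atTop (𝓝 0) ∧
    -- identification of the limit
    (∀ ωM ωo : Fin 2 → ℝ,
      (⨍ ξ in (fun v => Aj⁻¹.mulVec v) '' cell AM,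
          h (Aj.mulVec ξ + ωM) ((Aj - Aoth).mulVec ξ + ωo)) =
        (⨍ x in cell AM, h x (Dj.mulVec (x - ωM) + ωo)) ∧
      (⨍ ξ in (fun v => Aj⁻¹.mulVec v) '' cell AM,
          h (Aj.mulVec ξ + ωM) ((Aj - Aoth).mulVec ξ + ωo)) =
        (⨍ y in cell Aoth, h (Dj⁻¹.mulVec (y - ωo) + ωM) y)) := by
  have hq' : Real.sqrt q ≠ 0 := (Real.sqrt_pos.2 hq).ne'
  exact double_ergodic_theorem_general A1 A2 B1 B2 BM AM
    (hA1 ▸ isUnit_det_smul_Rot_mul (inv_ne_zero hq') _ hA)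
    (hA2 ▸ isUnit_det_smul_Rot_mul hq' _ hA)
    hB1 hB2 hBM hBMinv hAM hinc j Aj Aoth Dj hAj hAoth hDj h hloc hper

end
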